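/- (Bergman zero sets are critical sets) Let φ : 𝔻 → ℂ be a holomorphic function, not identically zero, belonging to the Bergman space A²₁ (i.e. ∬_𝔻 (1 − |z|²) |φ(z)|² dx dy < ∞). Then there exists a nonconstant holomorphic function f from 𝔻 into the closed unit disk such that for every z ∈ 𝔻 the order of vanishing of f' at z equals the order of vanishing of φ at z. -/

import Mathlib

open Metric Filter MeasureTheory

/-- The order of vanishing of `f` at `z`. -/
noncomputable def vOrder (f : ℂ → ℂ) (z : ℂ) : ℕ∞ :=
  sInf ((fun n : ℕ => (n : ℕ∞)) '' {n : ℕ | iteratedDeriv n f z ≠ 0})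

/-!
A primitive `Φ` of `φ` lies in the Hardy space `H²`, so `|Φ|² ≤ re H` for some `H` holomorphic on
the disk. For `r < 1` the dilation `r φ(r z)` factors as `Q ψ`, with `Q` a polynomial whose zeros
are those of the dilation in the open disk.

Heins' theorem gives a finite Blaschke product `f` with critical points the zeros of `Q`. Write
`f = z p* / p` with `p` zero-free on the closed disk, where `p*(z) = zⁿ conj (p (1 / conj z))`; the
numerator of `f'` should be `Q Q*`, up to a factor. On the circle these numerators are `zⁿ` times
real functions, and one deforms a single solution to all positive ones: solvability is an open
condition because an infinitesimal deformation fixing the critical points vanishes (a maximum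
principle), and a closed one because `|f'| ≥ 1` on the circle bounds `p`.

The metric `exp (|Φ|² + |z|² - re H - 1) |Φ'|` has curvature less than `-4` where `|Φ|² ≤ re H`, so
Ahlfors' lemma, with boundary values infinite for the pull-back of the hyperbolic metric under `f`,
gives `(1 - |z|²) exp (-re H - 1) |r φ(r z)| ≤ |f'|`. As `r → 1`, a limit of the `f` keeps this
lower bound, and the maximum principle for `f' / (r φ(r z))` on small circles shows that the
derivative of the limit is `O(φ)` near every point. Hence `f'` and `φ` vanish to the same orders.
-/

section

open scoped Topology ComplexConjugate Polynomial

/-! ### Infinitesimal deformations of self-maps of the disk -/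

theorem not_isLocalMax_norm_mul {A : ℂ → ℂ} {E : ℂ → ℝ} {a : ℂ} (hA : AnalyticAt ℂ A a)
    (hA0 : A a ≠ 0) (hE : ∀ᶠ z in 𝓝[≠] a, 1 < E z) (hE0 : E a = 1) :
    ¬ IsLocalMax (fun z => ‖A z‖ * E z) a := by
  intro hmax
  have hle : ∀ᶠ z in 𝓝[≠] a, ‖A z‖ * E z ≤ ‖A a‖ := by
    filter_upwards [hmax.filter_mono nhdsWithin_le_nhds] with z hz
    simpa only [hE0, mul_one] using hz
  have hA_max : IsLocalMax (norm ∘ A) a := by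
    rw [IsLocalMax, IsMaxFilter, ← nhdsNE_sup_pure a, eventually_sup]
    refine ⟨?_, by simp⟩
    filter_upwards [hE, hle] with z hz hz'
    exact (le_mul_of_one_le_right (norm_nonneg _) hz.le).trans hz'
  have hA_const := Complex.eventually_eq_of_isLocalMax_norm
    (hA.eventually_analyticAt.mono fun z hz => hz.differentiableAt) hA_max
  obtain ⟨z, hz, hz', hconst⟩ :=
    (hE.and (hle.and (hA_const.filter_mono nhdsWithin_le_nhds))).exists
  rw [hconst] at hz'
  exact hz'.not_gt (lt_mul_of_one_lt_right (norm_pos_iff.2 hA0) hz)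

theorem not_isLocalMax_re_add {A : ℂ → ℂ} {G : ℂ → ℝ} {a : ℂ} (hA : AnalyticAt ℂ A a)
    (hG : ContinuousAt G a) (hG0 : 0 < G a) :
    ¬ IsLocalMax (fun z => (A z).re + ‖z - a‖ ^ 2 * G z) a := by
  intro hmax
  refine not_isLocalMax_norm_mul (A := fun z => Complex.exp (A z))
    (E := fun z => Real.exp (‖z - a‖ ^ 2 * G z)) hA.cexp (Complex.exp_ne_zero _) ?_ (by simp) ?_
  · filter_upwards [(hG.eventually (lt_mem_nhds hG0)).filter_mono nhdsWithin_le_nhds,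
      self_mem_nhdsWithin] with z hz hza
    have : 0 < ‖z - a‖ := norm_pos_iff.2 (sub_ne_zero.2 hza)
    exact Real.one_lt_exp_iff.2 (by positivity)
  · simp only [Complex.norm_exp, ← Real.exp_add]
    exact hmax.comp_mono Real.exp_monotone

theorem eventually_eq_const_of_re_eq_zero {k : ℂ → ℂ} {a : ℂ} (hk : AnalyticAt ℂ k a)
    (hre : ∀ᶠ z in 𝓝 a, (k z).re = 0) : ∀ᶠ z in 𝓝 a, k z = k a := by
  refine hk.eventually_constant_or_nhds_le_map_nhds.resolve_right fun hopen => ?_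
  have hshift : Tendsto (fun t : ℝ => k a + t) (𝓝[≠] 0) (𝓝 (k a)) := by
    have : Continuous fun t : ℝ => k a + t := by fun_prop
    simpa using (this.tendsto 0).mono_left nhdsWithin_le_nhds
  have hzero : ∀ᶠ w in 𝓝 (k a), w.re = 0 := hopen (mem_map.2 hre)
  obtain ⟨t, ht, ht0⟩ := ((hshift.eventually hzero).and self_mem_nhdsWithin).exists
  exact ht0 (by simpa [hre.self_of_nhds] using ht)

theorem one_sub_conj_mul_ne_zero {a w : ℂ} (ha : ‖a‖ < 1) (hw : ‖w‖ < 1) :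
    1 - conj a * w ≠ 0 := by
  refine sub_ne_zero.2 fun h => ?_
  have := congrArg norm h
  rw [norm_one, norm_mul, RCLike.norm_conj] at this
  nlinarith [norm_nonneg a, norm_nonneg w]

theorem one_sub_norm_sq_pos {w : ℂ} (hw : ‖w‖ < 1) : 0 < 1 - ‖w‖ ^ 2 :=
  sub_pos.2 (pow_lt_one₀ (norm_nonneg w) hw two_ne_zero)

/-- The automorphism `w ↦ (w - a) / (1 - āw)` of the unit disk sending `a` to `0`. -/
noncomputable def diskMobius (a w : ℂ) : ℂ := (w - a) / (1 - conj a * w)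

@[simp] theorem diskMobius_self (a : ℂ) : diskMobius a a = 0 := by simp [diskMobius]

theorem one_sub_norm_diskMobius_sq {a w : ℂ} (ha : ‖a‖ < 1) (hw : ‖w‖ < 1) :
    1 - ‖diskMobius a w‖ ^ 2 = (1 - ‖a‖ ^ 2) * (1 - ‖w‖ ^ 2) / ‖1 - conj a * w‖ ^ 2 := by
  have hpos : 0 < ‖1 - conj a * w‖ ^ 2 := by
    have := norm_pos_iff.2 (one_sub_conj_mul_ne_zero ha hw)
    positivity
  rw [diskMobius, norm_div, div_pow, eq_div_iff hpos.ne', sub_mul, div_mul_cancel₀ _ hpos.ne']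
  simp only [← Complex.normSq_eq_norm_sq, Complex.normSq_apply, Complex.sub_re, Complex.sub_im,
    Complex.mul_re, Complex.mul_im, Complex.conj_re, Complex.conj_im, Complex.one_re,
    Complex.one_im]
  ring

theorem hasDerivAt_diskMobius_comp {f : ℂ → ℂ} {f' z : ℂ} (hf : HasDerivAt f f' z)
    (hz : ‖f z‖ < 1) :
    HasDerivAt (fun w => diskMobius (f z) (f w)) (f' / (1 - conj (f z) * f z)) z := by
  have hne := one_sub_conj_mul_ne_zero hz hz
  refine ((hf.sub_const (f z)).div ((hf.const_mul (conj (f z))).const_sub 1) hne).congr_deriv ?_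
  field_simp
  ring

theorem re_conj_sub_mul_sub (f g : ℂ → ℂ) (a z : ℂ) :
    (conj (f z - f a) * (g z - g a)).re =
      ‖z - a‖ ^ 2 * (conj (dslope f a z) * dslope g a z).re := by
  rw [← sub_smul_dslope f a z, ← sub_smul_dslope g a z, smul_eq_mul, smul_eq_mul,
    ← Complex.re_ofReal_mul, ← Complex.normSq_eq_norm_sq, Complex.normSq_eq_conj_mul_self, map_mul]
  congr 1
  ring

theorem continuousAt_re_conj_dslope_mul_dslope {f g : ℂ → ℂ} {a : ℂ}
    (hf : DifferentiableAt ℂ f a) (hg : DifferentiableAt ℂ g a) :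
    ContinuousAt (fun z => (conj (dslope f a z) * dslope g a z).re) a := by
  have hf' := continuousAt_dslope_same.2 hf
  have hg' := continuousAt_dslope_same.2 hg
  fun_prop

theorem re_add_norm_sq_mul_re_conj_dslope {τ : ℂ → ℂ} (K S : ℂ → ℂ) {a : ℂ} (ε M : ℝ)
    (hτ0 : τ a = 0) (z : ℂ) :
    (conj (K a) * τ z - S z + ε * (2 * conj a * (z - a))).re +
        ‖z - a‖ ^ 2 * ((conj (dslope τ a z) * dslope K a z).re +
          (M - ε * ‖z‖ ^ 2) * (conj (dslope τ a z) * dslope τ a z).re + ε) =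
      (conj (τ z) * K z - S z).re - (M - ε * ‖z‖ ^ 2) * (1 - ‖τ z‖ ^ 2) +
        (M - ε * ‖a‖ ^ 2) := by
  have hτK := re_conj_sub_mul_sub τ K a z
  have hττ := re_conj_sub_mul_sub τ τ a z
  rw [hτ0, sub_zero] at hτK hττ
  rw [mul_add, mul_add, mul_left_comm _ (M - _), ← hτK, ← hττ]
  simp only [← Complex.normSq_eq_norm_sq, Complex.normSq_apply, Complex.add_re,
    Complex.sub_re, Complex.sub_im, Complex.mul_re, Complex.mul_im, Complex.conj_re,
    Complex.conj_im, Complex.ofReal_re, Complex.ofReal_im, Complex.re_ofNat, Complex.im_ofNat]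
  ring

theorem not_isLocalMax_of_apply_eq_zero {τ K S : ℂ → ℂ} {a : ℂ} {ε : ℝ} (hε : 0 < ε)
    (hτ : AnalyticAt ℂ τ a) (hK : AnalyticAt ℂ K a) (hS : AnalyticAt ℂ S a) (hτ0 : τ a = 0)
    (hode : deriv K a = -(deriv τ a * S a)) (hS0 : (S a).re < 0) :
    ¬ IsLocalMax (fun z => (conj (τ z) * K z - S z).re / (1 - ‖τ z‖ ^ 2) + ε * ‖z‖ ^ 2) a := by
  intro hmax
  set M : ℝ := -(S a).re + ε * ‖a‖ ^ 2 with hM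
  set A : ℂ → ℂ := fun z => conj (K a) * τ z - S z + ε * (2 * conj a * (z - a))
  set G : ℂ → ℝ := fun z => (conj (dslope τ a z) * dslope K a z).re +
    (M - ε * ‖z‖ ^ 2) * (conj (dslope τ a z) * dslope τ a z).re + ε with hG
  have hGc : ContinuousAt G a := by
    have := continuousAt_re_conj_dslope_mul_dslope hτ.differentiableAt hK.differentiableAt
    have := continuousAt_re_conj_dslope_mul_dslope hτ.differentiableAt hτ.differentiableAt
    fun_prop
  have hG0 : 0 < G a := by
    have hGa : G a = ε - 2 * (S a).re * ‖deriv τ a‖ ^ 2 := by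
      simp only [hG, hM, dslope_same, hode, ← Complex.normSq_eq_norm_sq, Complex.normSq_apply,
        Complex.mul_re, Complex.mul_im, Complex.conj_re, Complex.conj_im, Complex.neg_re,
        Complex.neg_im]
      ring
    rw [hGa]
    nlinarith [sq_nonneg ‖deriv τ a‖]
  have hτ_lt : ∀ᶠ z in 𝓝 a, ‖τ z‖ < 1 :=
    hτ.continuousAt.norm.eventually_lt_const (by simp [hτ0])
  refine not_isLocalMax_re_add (A := A) (by fun_prop) hGc hG0 ?_
  filter_upwards [hmax, hτ_lt] with z hz hz1
  have hz_le : (conj (τ z) * K z - S z).re ≤ (M - ε * ‖z‖ ^ 2) * (1 - ‖τ z‖ ^ 2) := by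
    rw [← div_le_iff₀ (one_sub_norm_sq_pos hz1), le_sub_iff_add_le]
    simpa [hτ0, hM] using hz
  have hsum (w : ℂ) := re_add_norm_sq_mul_re_conj_dslope K S ε M hτ0 w
  rw [hsum, hsum, hτ0]
  simp only [map_zero, zero_mul, zero_sub, Complex.neg_re, norm_zero, hM]
  linarith

theorem re_div_one_sub_norm_diskMobius_sq {a w m s : ℂ} (ha : ‖a‖ < 1) (hw : ‖w‖ < 1) :
    (conj (diskMobius a w) * ((m - a * s) / (1 - conj a * w)) -
        (s - conj a * m) / (1 - conj a * w)).re / (1 - ‖diskMobius a w‖ ^ 2) =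
      (conj w * m - s).re / (1 - ‖w‖ ^ 2) := by
  have hne := one_sub_conj_mul_ne_zero ha hw
  have hne' := one_sub_conj_mul_ne_zero hw ha
  have hnorm : ((‖1 - conj a * w‖ ^ 2 : ℝ) : ℂ) = (1 - conj a * w) * (1 - conj w * a) := by
    rw [← Complex.normSq_eq_norm_sq, ← Complex.mul_conj]
    simp [mul_comm a]
  have hnum : conj (diskMobius a w) * ((m - a * s) / (1 - conj a * w)) -
      (s - conj a * m) / (1 - conj a * w) =
      ((conj w - conj a) * (m - a * s) - (s - conj a * m) * (1 - conj w * a)) /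
        ((‖1 - conj a * w‖ ^ 2 : ℝ) : ℂ) := by
    rw [hnorm]
    simp only [diskMobius, map_div₀, map_sub, map_mul, map_one, Complex.conj_conj]
    field_simp
  have hnum_re : ((conj w - conj a) * (m - a * s) - (s - conj a * m) * (1 - conj w * a)).re =
      (1 - ‖a‖ ^ 2) * (conj w * m - s).re := by
    rw [← Complex.normSq_eq_norm_sq]
    simp only [Complex.normSq_apply, Complex.sub_re, Complex.sub_im, Complex.mul_re,
      Complex.mul_im, Complex.conj_re, Complex.conj_im, Complex.one_re, Complex.one_im]
    ring
  have hw' := one_sub_norm_sq_pos hw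
  have ha' := one_sub_norm_sq_pos ha
  have : 0 < ‖1 - conj a * w‖ := norm_pos_iff.2 hne
  rw [hnum, Complex.div_ofReal_re, hnum_re, one_sub_norm_diskMobius_sq ha hw]
  field_simp

theorem not_isLocalMax_linearised {f s m : ℂ → ℂ} {a : ℂ} {ε : ℝ} (hε : 0 < ε)
    (hf : AnalyticAt ℂ f a) (hs : AnalyticAt ℂ s a) (hm : AnalyticAt ℂ m a) (hfa : ‖f a‖ < 1)
    (hode : deriv m a = f a * deriv s a - deriv f a * s a)
    (hpos : 0 < (conj (f a) * m a - s a).re) :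
    ¬ IsLocalMax (fun z => (conj (f z) * m z - s z).re / (1 - ‖f z‖ ^ 2) + ε * ‖z‖ ^ 2) a := by
  intro hmax
  have hne := one_sub_conj_mul_ne_zero hfa hfa
  have hf_lt : ∀ᶠ z in 𝓝 a, ‖f z‖ < 1 := hf.continuousAt.norm.eventually_lt_const hfa
  set S : ℂ → ℂ := fun z => (s z - conj (f a) * m z) / (1 - conj (f a) * f z) with hS
  set K : ℂ → ℂ := fun z => (m z - f a * s z) / (1 - conj (f a) * f z)
  have hτ_deriv := hasDerivAt_diskMobius_comp hf.differentiableAt.hasDerivAt hfa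
  have hK_deriv : deriv K a = -(deriv f a / (1 - conj (f a) * f a) * S a) := by
    have hf' := hf.differentiableAt.hasDerivAt
    have hs' := hs.differentiableAt.hasDerivAt
    have hm' := hm.differentiableAt.hasDerivAt
    have := (hm'.sub (hs'.const_mul (f a))).div ((hf'.const_mul (conj (f a))).const_sub 1) hne
    refine this.deriv.trans ?_
    simp only [hS, hode, Pi.sub_apply]
    field_simp
    ring
  refine not_isLocalMax_of_apply_eq_zero (τ := fun z => diskMobius (f a) (f z)) (K := K) (S := S)
    hε ?_ (by fun_prop (disch := exact hne)) (by fun_prop (disch := exact hne))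
    (diskMobius_self _) (by rw [hK_deriv, hτ_deriv.deriv]) ?_ ?_
  · exact (hf.sub analyticAt_const).div (analyticAt_const.sub (analyticAt_const.mul hf)) hne
  · have h := re_div_one_sub_norm_diskMobius_sq (m := m a) (s := s a) hfa hfa
    have h' := div_pos hpos (one_sub_norm_sq_pos hfa)
    rw [← h] at h'
    simpa [hS] using h'
  · refine hmax.congr ?_
    filter_upwards [hf_lt] with z hz
    rw [re_div_one_sub_norm_diskMobius_sq hfa hz]

theorem conj_mul_self_of_norm_eq_one {w : ℂ} (hw : ‖w‖ = 1) : conj w * w = 1 := by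
  rw [← Complex.normSq_eq_conj_mul_self, Complex.normSq_eq_norm_sq, hw, one_pow, Complex.ofReal_one]

theorem hasStrictFDerivAt_re_conj_mul_sub_zero {f s m : ℂ → ℂ} {ζ : ℂ}
    (hf : AnalyticAt ℂ f ζ) (hs : AnalyticAt ℂ s ζ) (hm : AnalyticAt ℂ m ζ) (hfζ : ‖f ζ‖ = 1)
    (hms : conj (f ζ) * m ζ = conj (s ζ))
    (hode : deriv m ζ = f ζ * deriv s ζ - deriv f ζ * s ζ) :
    HasStrictFDerivAt (fun z => (conj (f z) * m z - s z).re) (0 : ℂ →L[ℝ] ℝ) ζ := by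
  have hff := conj_mul_self_of_norm_eq_one hfζ
  have hm_conj : conj (m ζ) = conj (f ζ) * s ζ := by
    have := congrArg conj hms
    simp only [map_mul, Complex.conj_conj] at this
    linear_combination (-conj (m ζ)) * hff + conj (f ζ) * this
  have hf' := hf.hasStrictDerivAt.hasStrictFDerivAt.restrictScalars ℝ
  have hm' := hm.hasStrictDerivAt.hasStrictFDerivAt.restrictScalars ℝ
  have hs' := hs.hasStrictDerivAt.hasStrictFDerivAt.restrictScalars ℝ
  have hf_conj := (Complex.conjCLE.toContinuousLinearMap.hasStrictFDerivAt (x := f ζ)).comp ζ hf'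
  refine ((Complex.reCLM.hasStrictFDerivAt (x := conj (f ζ) * m ζ - s ζ)).comp ζ
    ((hf_conj.mul hm').sub hs')).congr_fderiv ?_
  ext v
  have hderiv : (conj (f ζ) * (v * deriv m ζ) + m ζ * conj (v * deriv f ζ) -
      v * deriv s ζ).re = 0 := by
    have hre : (m ζ * conj (v * deriv f ζ)).re = (conj (m ζ) * (v * deriv f ζ)).re := by
      rw [← Complex.conj_re, map_mul, Complex.conj_conj]
    rw [Complex.sub_re, Complex.add_re, hre, ← Complex.add_re, ← Complex.sub_re, hm_conj, hode,
      ← Complex.zero_re]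
    congr 1
    linear_combination (v * deriv s ζ) * hff
  simpa using hderiv

theorem norm_sub_div_norm {z : ℂ} (hz0 : z ≠ 0) (hz1 : ‖z‖ ≤ 1) : ‖z - z / ‖z‖‖ = 1 - ‖z‖ := by
  have hne : (‖z‖ : ℂ) ≠ 0 := by exact_mod_cast norm_ne_zero_iff.2 hz0
  have : z - z / ‖z‖ = ((‖z‖ - 1 : ℝ) : ℂ) * (z / ‖z‖) := by
    push_cast
    field_simp
  rw [this, norm_mul, norm_div, Complex.norm_real, Complex.norm_real, norm_norm,
    div_self (norm_ne_zero_iff.2 hz0), mul_one, Real.norm_of_nonpos (by linarith)]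
  ring

theorem isLittleO_one_sub_norm_of_hasStrictFDerivAt_zero {W : ℂ → ℝ} {ζ : ℂ} (hζ : ‖ζ‖ = 1)
    (hW : HasStrictFDerivAt W (0 : ℂ →L[ℝ] ℝ) ζ) (hW0 : ∀ z, ‖z‖ = 1 → W z = 0) :
    W =o[𝓝[closedBall 0 1] ζ] fun z => 1 - ‖z‖ := by
  have hζ0 : ζ ≠ 0 := norm_ne_zero_iff.1 (by simp [hζ])
  have hradial : Tendsto (fun z : ℂ => (z, z / (‖z‖ : ℂ))) (𝓝 ζ) (𝓝 (ζ, ζ)) := by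
    have : ContinuousAt (fun z : ℂ => z / (‖z‖ : ℂ)) ζ :=
      continuousAt_id.div (by fun_prop) (by simpa using hζ0)
    exact tendsto_id.prodMk_nhds (by simpa [hζ] using this.tendsto)
  refine ((hW.isLittleO.comp_tendsto hradial).mono nhdsWithin_le_nhds).norm_right.congr' ?_ ?_
  · filter_upwards [nhdsWithin_le_nhds (isOpen_ne.mem_nhds hζ0)] with z hz
    have hunit : ‖z / (‖z‖ : ℂ)‖ = 1 := by simp [norm_ne_zero_iff.2 hz]
    simp [hW0 _ hunit]
  · filter_upwards [nhdsWithin_le_nhds (isOpen_ne.mem_nhds hζ0), self_mem_nhdsWithin] with z hz hz1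
    exact norm_sub_div_norm hz (mem_closedBall_zero_iff.1 hz1)

/-- The pair `(s, m)` is an infinitesimal deformation of the self-map `f` of the disk that keeps
the unit circle invariant and the critical points fixed. For `f = z p* / p` and a variation `x`
of the polynomial `p`, one has `s = x / p` and `m = z x* / p`, and `ode` says that the numerator
of `f'` is stationary. -/
structure IsInfinitesimalDeformation (f s m : ℂ → ℂ) : Prop where
  analyticAt : ∀ z, ‖z‖ ≤ 1 → AnalyticAt ℂ f z
  analyticAt_left : ∀ z, ‖z‖ ≤ 1 → AnalyticAt ℂ s z
  analyticAt_right : ∀ z, ‖z‖ ≤ 1 → AnalyticAt ℂ m z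
  norm_le : ∀ z, ‖z‖ ≤ 1 → ‖f z‖ ≤ ‖z‖
  norm_eq_one : ∀ z, ‖z‖ = 1 → ‖f z‖ = 1
  conj_mul : ∀ z, ‖z‖ = 1 → conj (f z) * m z = conj (s z)
  ode : ∀ z, ‖z‖ ≤ 1 → deriv m z = f z * deriv s z - deriv f z * s z

namespace IsInfinitesimalDeformation

variable {f s m : ℂ → ℂ}

theorem neg (h : IsInfinitesimalDeformation f s m) :
    IsInfinitesimalDeformation f (-s) (-m) where
  analyticAt := h.analyticAt
  analyticAt_left z hz := (h.analyticAt_left z hz).neg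
  analyticAt_right z hz := (h.analyticAt_right z hz).neg
  norm_le := h.norm_le
  norm_eq_one := h.norm_eq_one
  conj_mul z hz := by simp [← h.conj_mul z hz]
  ode z hz := by
    simp only [deriv.neg, Pi.neg_apply, h.ode z hz]
    ring

theorem analyticOnNhd (h : IsInfinitesimalDeformation f s m) : AnalyticOnNhd ℂ f (ball 0 1) :=
  fun z hz => h.analyticAt z (mem_ball_zero_iff.1 hz).le

theorem analyticOnNhd_left (h : IsInfinitesimalDeformation f s m) :
    AnalyticOnNhd ℂ s (ball 0 1) :=
  fun z hz => h.analyticAt_left z (mem_ball_zero_iff.1 hz).le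

theorem analyticOnNhd_right (h : IsInfinitesimalDeformation f s m) :
    AnalyticOnNhd ℂ m (ball 0 1) :=
  fun z hz => h.analyticAt_right z (mem_ball_zero_iff.1 hz).le

theorem continuousAt_re (h : IsInfinitesimalDeformation f s m) {z : ℂ} (hz : ‖z‖ ≤ 1) :
    ContinuousAt (fun w => (conj (f w) * m w - s w).re) z := by
  have := (h.analyticAt z hz).continuousAt
  have := (h.analyticAt_left z hz).continuousAt
  have := (h.analyticAt_right z hz).continuousAt
  fun_prop

theorem continuousWithinAt_of_norm_eq_one (h : IsInfinitesimalDeformation f s m) {ζ : ℂ}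
    (hζ : ‖ζ‖ = 1) :
    ContinuousWithinAt (fun z => (conj (f z) * m z - s z).re / (1 - ‖f z‖ ^ 2))
      (closedBall 0 1) ζ := by
  have hW := isLittleO_one_sub_norm_of_hasStrictFDerivAt_zero hζ
    (hasStrictFDerivAt_re_conj_mul_sub_zero (h.analyticAt ζ hζ.le) (h.analyticAt_left ζ hζ.le)
      (h.analyticAt_right ζ hζ.le) (h.norm_eq_one ζ hζ) (h.conj_mul ζ hζ) (h.ode ζ hζ.le))
    fun z hz => by simp [h.conj_mul z hz]
  have hle : (fun z : ℂ => 1 - ‖z‖) =O[𝓝[closedBall 0 1] ζ] fun z => 1 - ‖f z‖ ^ 2 := by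
    refine Asymptotics.IsBigO.of_bound 1 ?_
    filter_upwards [self_mem_nhdsWithin] with z hz
    have hz1 := mem_closedBall_zero_iff.1 hz
    have hfz := h.norm_le z hz1
    have hsq : ‖f z‖ ^ 2 ≤ ‖z‖ := by nlinarith [norm_nonneg (f z)]
    rw [one_mul, Real.norm_of_nonneg (by linarith), Real.norm_of_nonneg (by linarith)]
    linarith
  simpa [ContinuousWithinAt, h.norm_eq_one ζ hζ] using (hW.trans_isBigO hle).tendsto_div_nhds_zero

theorem continuousOn_closedBall (h : IsInfinitesimalDeformation f s m) :
    ContinuousOn (fun z => (conj (f z) * m z - s z).re / (1 - ‖f z‖ ^ 2)) (closedBall 0 1) := by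
  intro z hz
  have hz1 := mem_closedBall_zero_iff.1 hz
  rcases hz1.lt_or_eq with hlt | heq
  · have hfz := one_sub_norm_sq_pos ((h.norm_le z hz1).trans_lt hlt)
    exact ((h.continuousAt_re hz1).div
      (continuousAt_const.sub ((h.analyticAt z hz1).continuousAt.norm.pow 2))
      hfz.ne').continuousWithinAt
  · exact h.continuousWithinAt_of_norm_eq_one heq

theorem re_nonpos (h : IsInfinitesimalDeformation f s m) {z : ℂ} (hz : ‖z‖ < 1) :
    (conj (f z) * m z - s z).re ≤ 0 := by
  by_contra! hcon
  set u : ℂ → ℝ := fun w => (conj (f w) * m w - s w).re / (1 - ‖f w‖ ^ 2) with hu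
  have hden {w : ℂ} (hw : ‖w‖ < 1) : 0 < 1 - ‖f w‖ ^ 2 :=
    one_sub_norm_sq_pos ((h.norm_le w hw.le).trans_lt hw)
  have huz : 0 < u z := div_pos hcon (hden hz)
  obtain ⟨a, ha, hmax⟩ := (isCompact_closedBall (0 : ℂ) 1).exists_isMaxOn
    (f := fun w => u w + u z / 2 * ‖w‖ ^ 2) ⟨0, by simp⟩
    (h.continuousOn_closedBall.add (by fun_prop))
  have ha1 : ‖a‖ ≤ 1 := mem_closedBall_zero_iff.1 ha
  have hua : 0 < u a := by
    have hza : u z + u z / 2 * ‖z‖ ^ 2 ≤ u a + u z / 2 * ‖a‖ ^ 2 :=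
      hmax (mem_closedBall_zero_iff.2 hz.le)
    have : ‖a‖ ^ 2 ≤ 1 := pow_le_one₀ (norm_nonneg a) ha1
    nlinarith [sq_nonneg ‖z‖]
  have ha_lt : ‖a‖ < 1 := ha1.lt_of_ne fun h1 => by simp [hu, h.norm_eq_one a h1] at hua
  refine not_isLocalMax_linearised (half_pos huz) (h.analyticAt a ha1) (h.analyticAt_left a ha1)
    (h.analyticAt_right a ha1) ((h.norm_le a ha1).trans_lt ha_lt) (h.ode a ha1)
    ((div_pos_iff_of_pos_right (hden ha_lt)).1 hua) ?_
  filter_upwards [isOpen_ball.mem_nhds (mem_ball_zero_iff.2 ha_lt)] with w hw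
  exact hmax (ball_subset_closedBall hw)

theorem re_eq_zero (h : IsInfinitesimalDeformation f s m) {z : ℂ} (hz : ‖z‖ < 1) :
    (conj (f z) * m z - s z).re = 0 := by
  refine le_antisymm (h.re_nonpos hz) ?_
  have := h.neg.re_nonpos hz
  simp only [Pi.neg_apply, mul_neg, Complex.sub_re, Complex.neg_re] at this ⊢
  linarith

end IsInfinitesimalDeformation

theorem re_conj_deriv_mul_deriv_nonpos {A f g : ℂ → ℂ} {a : ℂ} (hA : AnalyticAt ℂ A a)
    (hf : AnalyticAt ℂ f a) (hg : AnalyticAt ℂ g a)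
    (hzero : ∀ᶠ z in 𝓝 a, (A z).re + (conj (f z - f a) * (g z - g a)).re = 0) :
    (conj (deriv f a) * deriv g a).re ≤ 0 := by
  by_contra! hcon
  refine not_isLocalMax_re_add hA
    (continuousAt_re_conj_dslope_mul_dslope hf.differentiableAt hg.differentiableAt)
    (by simpa only [dslope_same] using hcon) ?_
  simp only [← re_conj_sub_mul_sub]
  filter_upwards [hzero] with z hz
  exact (hz.trans hzero.self_of_nhds.symm).le

theorem re_conj_deriv_mul_deriv_eq_zero {f s m : ℂ → ℂ} {a : ℂ} (hf : AnalyticAt ℂ f a)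
    (hs : AnalyticAt ℂ s a) (hm : AnalyticAt ℂ m a)
    (hzero : ∀ᶠ z in 𝓝 a, (conj (f z) * m z - s z).re = 0) :
    (conj (deriv f a) * deriv m a).re = 0 := by
  set A : ℂ → ℂ := fun z => conj (f a) * m z + conj (m a) * (f z - f a) - s z with hA
  have hA_an : AnalyticAt ℂ A a := by fun_prop
  have hsum : ∀ᶠ z in 𝓝 a, (A z).re + (conj (f z - f a) * (m z - m a)).re = 0 := by
    filter_upwards [hzero] with z hz
    rw [← hz]
    simp only [hA, Complex.add_re, Complex.sub_re, Complex.sub_im, Complex.mul_re, Complex.conj_re,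
      Complex.conj_im]
    ring
  refine le_antisymm (re_conj_deriv_mul_deriv_nonpos hA_an hf hm hsum) ?_
  have := re_conj_deriv_mul_deriv_nonpos hA_an.neg hf hm.neg <| hsum.mono fun z hz => by
    simp only [Pi.neg_apply, Complex.neg_re, neg_sub_neg, ← neg_sub (m z), mul_neg] at hz ⊢
    linarith
  rw [deriv.neg, mul_neg, Complex.neg_re] at this
  linarith

theorem eqOn_ball_of_deriv_eqOn {F G : ℂ → ℂ} {R : ℝ} (hF : DifferentiableOn ℂ F (ball 0 R))
    (hG : DifferentiableOn ℂ G (ball 0 R)) (hd : (ball 0 R).EqOn (deriv F) (deriv G))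
    (h0 : F 0 = G 0) : (ball 0 R).EqOn F G := fun _ hz =>
  isOpen_ball.eqOn_of_deriv_eq (convex_ball (0 : ℂ) R).isPreconnected hF hG hd
    (mem_ball_self (pos_of_mem_ball hz)) h0 hz

namespace IsInfinitesimalDeformation

variable {f s m : ℂ → ℂ}

theorem apply_zero (h : IsInfinitesimalDeformation f s m) : f 0 = 0 := by
  simpa using h.norm_le 0 (by simp)

theorem exists_deriv_ne_zero (h : IsInfinitesimalDeformation f s m) :
    ∃ z ∈ ball (0 : ℂ) 1, deriv f z ≠ 0 := by
  by_contra! hcon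
  have hf0 : (ball 0 1).EqOn f 0 :=
    eqOn_ball_of_deriv_eqOn h.analyticOnNhd.differentiableOn (differentiableOn_const 0)
      (fun _ hz => by simpa using hcon _ hz) h.apply_zero
  have hcont : ContinuousOn f (closedBall 0 1) := fun z hz =>
    (h.analyticAt z (mem_closedBall_zero_iff.1 hz)).continuousAt.continuousWithinAt
  have hf1 : f 1 = 0 := hf0.of_subset_closure hcont continuousOn_const ball_subset_closedBall
    (closure_ball (0 : ℂ) one_ne_zero).ge (by simp)
  simpa [hf1] using h.norm_eq_one 1 (by simp)

theorem exists_deriv_eq_const_mul (h : IsInfinitesimalDeformation f s m) :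
    ∃ κ : ℂ, κ.re = 0 ∧ (ball 0 1).EqOn (deriv m) fun z => κ * deriv f z := by
  obtain ⟨a, ha, hfa⟩ := h.exists_deriv_ne_zero
  have hf' := h.analyticOnNhd.deriv
  have hm' := h.analyticOnNhd_right.deriv
  have hre : ∀ᶠ z in 𝓝 a, (deriv m z / deriv f z).re = 0 := by
    filter_upwards [isOpen_ball.mem_nhds ha] with z hz
    have hconj : deriv m z / deriv f z =
        (conj (deriv f z) * deriv m z) / ((Complex.normSq (deriv f z) : ℝ) : ℂ) := by
      rw [div_eq_mul_inv, Complex.inv_def]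
      push_cast
      ring
    rw [hconj, Complex.div_ofReal_re, re_conj_deriv_mul_deriv_eq_zero (h.analyticOnNhd z hz)
      (h.analyticOnNhd_left z hz) (h.analyticOnNhd_right z hz), zero_div]
    filter_upwards [isOpen_ball.mem_nhds hz] with w hw
    exact h.re_eq_zero (mem_ball_zero_iff.1 hw)
  refine ⟨deriv m a / deriv f a, hre.self_of_nhds, ?_⟩
  refine hm'.eqOn_of_preconnected_of_eventuallyEq (fun z hz => analyticAt_const.mul (hf' z hz))
    (convex_ball (0 : ℂ) 1).isPreconnected ha ?_
  filter_upwards [eventually_eq_const_of_re_eq_zero ((hm' a ha).div (hf' a ha) hfa) hre,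
    (hf' a ha).continuousAt.eventually_ne hfa] with z hz hfz
  exact (div_eq_iff hfz).1 hz

theorem eqOn_zero (h : IsInfinitesimalDeformation f s m) (hm0 : m 0 = 0) (hs0 : (s 0).im = 0) :
    (ball 0 1).EqOn s 0 := by
  obtain ⟨κ, hκ, hderiv⟩ := h.exists_deriv_eq_const_mul
  have hmf : (ball 0 1).EqOn m fun z => κ * f z := by
    refine eqOn_ball_of_deriv_eqOn h.analyticOnNhd_right.differentiableOn
      (h.analyticOnNhd.differentiableOn.const_mul κ) (fun z hz => ?_) (by simp [hm0, h.apply_zero])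
    rw [hderiv hz, deriv_const_mul κ (h.analyticOnNhd z hz).differentiableAt]
  have hs_re : ∀ z ∈ ball (0 : ℂ) 1, (s z).re = 0 := by
    intro z hz
    have hz0 := h.re_eq_zero (mem_ball_zero_iff.1 hz)
    have hfκ : conj (f z) * (κ * f z) = (Complex.normSq (f z) : ℝ) * κ := by
      rw [Complex.normSq_eq_conj_mul_self]
      ring
    rwa [hmf hz, hfκ, Complex.sub_re, Complex.re_ofReal_mul, hκ, mul_zero, zero_sub,
      neg_eq_zero] at hz0
  have hball : (0 : ℂ) ∈ ball (0 : ℂ) 1 := mem_ball_self one_pos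
  have hs_const := eventually_eq_const_of_re_eq_zero (h.analyticOnNhd_left 0 hball)
    (eventually_of_mem (isOpen_ball.mem_nhds hball) hs_re)
  rw [show s 0 = 0 from Complex.ext (hs_re 0 hball) hs0] at hs_const
  exact h.analyticOnNhd_left.eqOn_zero_of_preconnected_of_eventuallyEq_zero
    (convex_ball (0 : ℂ) 1).isPreconnected hball hs_const

end IsInfinitesimalDeformation

/-! ### Conjugate-reciprocal polynomials and the critical points of Blaschke products -/

theorem coeff_X_mul_derivative (p : ℂ[X]) (k : ℕ) :
    (Polynomial.X * Polynomial.derivative p).coeff k = k * p.coeff k := by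
  rcases k with _ | k
  · simp
  · rw [Polynomial.coeff_X_mul, Polynomial.coeff_derivative]
    push_cast
    ring

theorem natDegree_X_mul_derivative_le (p : ℂ[X]) :
    (Polynomial.X * Polynomial.derivative p).natDegree ≤ p.natDegree :=
  Polynomial.natDegree_le_iff_coeff_eq_zero.2 fun k hk => by
    rw [coeff_X_mul_derivative, Polynomial.coeff_eq_zero_of_natDegree_lt hk, mul_zero]

/-- The polynomial `p*(z) = zⁿ conj (p (1 / z̄))`, intended for `p` of degree at most `n`. -/
noncomputable def conjReflect (n : ℕ) (p : ℂ[X]) : ℂ[X] := (p.map (starRingEnd ℂ)).reflect n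

namespace conjReflect

open Polynomial

variable {m n : ℕ} {p q : ℂ[X]}

theorem coeff_of_le (p : ℂ[X]) {k : ℕ} (hk : k ≤ n) :
    (conjReflect n p).coeff k = conj (p.coeff (n - k)) := by
  rw [conjReflect, coeff_reflect, revAt_le hk, coeff_map]

theorem natDegree_le (hp : p.natDegree ≤ n) : (conjReflect n p).natDegree ≤ n :=
  natDegree_reflect_le.trans (max_le le_rfl (natDegree_map_le.trans hp))

theorem add (n : ℕ) (p q : ℂ[X]) :
    conjReflect n (p + q) = conjReflect n p + conjReflect n q := by
  rw [conjReflect, Polynomial.map_add, reflect_add, conjReflect, conjReflect]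

theorem sub (n : ℕ) (p q : ℂ[X]) :
    conjReflect n (p - q) = conjReflect n p - conjReflect n q := by
  rw [eq_sub_iff_add_eq, ← add, sub_add_cancel]

theorem C_mul (n : ℕ) (a : ℂ) (p : ℂ[X]) :
    conjReflect n (C a * p) = C (conj a) * conjReflect n p := by
  rw [conjReflect, Polynomial.map_mul, map_C, reflect_C_mul, conjReflect]

theorem conjReflect_conjReflect (n : ℕ) (p : ℂ[X]) : conjReflect n (conjReflect n p) = p := by
  rw [conjReflect, conjReflect, reflect_map, reflect_reflect, Polynomial.map_map]
  simp

theorem mul (hp : p.natDegree ≤ m) (hq : q.natDegree ≤ n) :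
    conjReflect (m + n) (p * q) = conjReflect m p * conjReflect n q := by
  rw [conjReflect, Polynomial.map_mul,
    reflect_mul _ _ (natDegree_map_le.trans hp) (natDegree_map_le.trans hq)]
  rfl

theorem eval_of_ne_zero (hp : p.natDegree ≤ n) {z : ℂ} (hz : z ≠ 0) :
    (conjReflect n p).eval z = z ^ n * conj (p.eval (conj z)⁻¹) := by
  let _ := invertibleOfNonzero (inv_ne_zero hz)
  have h := eval₂_reflect_mul_pow (RingHom.id ℂ) z⁻¹ n (p.map (starRingEnd ℂ))
    (natDegree_map_le.trans hp)
  rw [invOf_eq_inv, inv_inv, eval₂_id, eval₂_id, eval_map, inv_pow, mul_inv_eq_iff_eq_mul₀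
    (pow_ne_zero n hz), mul_comm] at h
  rw [conjReflect, h, ← eval₂_at_apply, map_inv₀, Complex.conj_conj]

theorem eval_of_norm_eq_one (hp : p.natDegree ≤ n) {z : ℂ} (hz : ‖z‖ = 1) :
    (conjReflect n p).eval z = z ^ n * conj (p.eval z) := by
  have hz0 : z ≠ 0 := norm_ne_zero_iff.1 (by simp [hz])
  rw [eval_of_ne_zero hp hz0, ← map_inv₀, Complex.inv_eq_conj hz, Complex.conj_conj]

theorem derivative_X_mul (hp : p.natDegree ≤ n) :
    derivative (X * conjReflect n p) =
      C (n + 1 : ℂ) * conjReflect n p - conjReflect n (X * derivative p) := by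
  have hXp : (X * derivative p).natDegree ≤ n := (natDegree_X_mul_derivative_le p).trans hp
  ext k
  rw [coeff_derivative, coeff_X_mul, coeff_sub, coeff_C_mul]
  rcases le_or_gt k n with hk | hk
  · rw [coeff_of_le p hk, coeff_of_le _ hk, coeff_X_mul_derivative, map_mul,
      Complex.conj_natCast, Nat.cast_sub hk]
    ring
  · rw [coeff_eq_zero_of_natDegree_lt ((natDegree_le hp).trans_lt hk),
      coeff_eq_zero_of_natDegree_lt ((natDegree_le hXp).trans_lt hk)]
    ring

end conjReflect

namespace conjReflect

open Polynomial

variable {n : ℕ} {t : ℂ[X]}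

theorem im_coeff_eq_zero (ht : conjReflect (n + n) t = t) : (t.coeff n).im = 0 := by
  rw [← Complex.conj_eq_iff_im]
  nth_rewrite 2 [← ht]
  rw [coeff_of_le t (Nat.le_add_left n n), Nat.add_sub_cancel]

theorem eq_X_pow_mul_add (ht : conjReflect (n + n) t = t) (hdeg : t.natDegree ≤ n + n) {h : ℂ[X]}
    (hh : ∀ k, h.coeff k = t.coeff (n + k)) :
    t = X ^ n * h + conjReflect (n + n) (X ^ n * h) - C (t.coeff n) * X ^ n := by
  have hXh (k : ℕ) : (X ^ n * h).coeff k = if n ≤ k then t.coeff k else 0 := by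
    rw [coeff_X_pow_mul', hh]
    exact if_ctx_congr Iff.rfl (fun hk => by rw [Nat.add_sub_cancel' hk]) fun _ => rfl
  have hXh_deg : (X ^ n * h).natDegree ≤ n + n := natDegree_le_iff_coeff_eq_zero.2 fun k hk => by
    rw [hXh, coeff_eq_zero_of_natDegree_lt (hdeg.trans_lt hk), ite_self]
  ext k
  rw [coeff_sub, coeff_add, hXh, coeff_C_mul_X_pow]
  rcases le_or_gt k (n + n) with hk | hk
  · have hkt : conj (t.coeff (n + n - k)) = t.coeff k := by rw [← coeff_of_le t hk, ht]
    rw [coeff_of_le _ hk, hXh, apply_ite conj, hkt, map_zero]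
    rcases lt_trichotomy k n with hkn | rfl | hkn
    · simp [hkn.not_ge, hkn.ne, show n ≤ n + n - k by lia]
    · simp
    · simp [hkn.le, hkn.ne', show ¬ n ≤ n + n - k by lia]
  · rw [coeff_eq_zero_of_natDegree_lt (hdeg.trans_lt hk),
      coeff_eq_zero_of_natDegree_lt ((natDegree_le hXh_deg).trans_lt hk)]
    simp [show k ≠ n by lia]

theorem eval_eq_pow_mul_two_mul_re (ht : conjReflect (n + n) t = t) (hdeg : t.natDegree ≤ n + n)
    {h : ℂ[X]} (hh : ∀ k, h.coeff k = t.coeff (n + k)) {z : ℂ} (hz : ‖z‖ = 1) :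
    t.eval z = z ^ n * ((2 * (h.eval z).re - (h.eval 0).re : ℝ) : ℂ) := by
  have hXh_deg : (X ^ n * h).natDegree ≤ n + n := natDegree_le_iff_coeff_eq_zero.2 fun k hk => by
    rw [coeff_X_pow_mul', hh, if_pos (by lia),
      coeff_eq_zero_of_natDegree_lt (by lia)]
  have hz1 : z ^ n * conj z ^ n = 1 := by
    rw [← mul_pow, mul_comm, conj_mul_self_of_norm_eq_one hz, one_pow]
  have hn : t.coeff n = ((h.eval 0).re : ℂ) := by
    rw [← coeff_zero_eq_eval_zero, hh, add_zero]
    exact Complex.ext rfl (im_coeff_eq_zero ht)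
  have h2 : ((2 * (h.eval z).re : ℝ) : ℂ) = h.eval z + conj (h.eval z) := (Complex.add_conj _).symm
  rw [eq_X_pow_mul_add ht hdeg hh, hn, Complex.ofReal_sub, h2, eval_sub, eval_add,
    eval_of_norm_eq_one hXh_deg hz, eval_mul, eval_mul, eval_pow, eval_X, eval_C, map_mul, map_pow]
  linear_combination (z ^ n * conj (h.eval z)) * hz1

theorem eq_of_coeff_eq {t₁ t₂ : ℂ[X]} (h₁ : conjReflect (n + n) t₁ = t₁)
    (h₂ : conjReflect (n + n) t₂ = t₂) (hdeg₁ : t₁.natDegree ≤ n + n)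
    (hdeg₂ : t₂.natDegree ≤ n + n) (h : ∀ k ≤ n, t₁.coeff (n + k) = t₂.coeff (n + k)) :
    t₁ = t₂ := by
  have hupper {k : ℕ} (hk : n ≤ k) (hk' : k ≤ n + n) : t₁.coeff k = t₂.coeff k := by
    simpa only [Nat.add_sub_cancel' hk] using h (k - n) (by lia)
  ext k
  rcases lt_or_ge (n + n) k with hk | hk
  · rw [coeff_eq_zero_of_natDegree_lt (hdeg₁.trans_lt hk),
      coeff_eq_zero_of_natDegree_lt (hdeg₂.trans_lt hk)]
  rcases le_or_gt n k with hkn | hkn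
  · exact hupper hkn hk
  · rw [← h₁, ← h₂, coeff_of_le _ hk, coeff_of_le _ hk, hupper (by lia) (by lia)]

end conjReflect

/-- The symmetric real-bilinear form polarising twice the Wronskian of `p` and `X p*`, which is the
numerator of the derivative of `z p*(z) / p(z)`. -/
noncomputable def wronskianForm (n : ℕ) (p q : ℂ[X]) : ℂ[X] :=
  p.wronskian (Polynomial.X * conjReflect n q) + q.wronskian (Polynomial.X * conjReflect n p)

namespace wronskianForm

open Polynomial

variable {n : ℕ} {p q : ℂ[X]}

theorem comm (n : ℕ) (p q : ℂ[X]) : wronskianForm n p q = wronskianForm n q p :=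
  add_comm _ _

theorem add_left (n : ℕ) (p₁ p₂ q : ℂ[X]) :
    wronskianForm n (p₁ + p₂) q = wronskianForm n p₁ q + wronskianForm n p₂ q := by
  rw [wronskianForm, wronskian_add_left, conjReflect.add, mul_add, wronskian_add_right,
    add_add_add_comm, wronskianForm, wronskianForm]

theorem smul_left (n : ℕ) (a : ℝ) (p q : ℂ[X]) :
    wronskianForm n (a • p) q = a • wronskianForm n p q := by
  have hsmul (t : ℂ[X]) : a • t = C (a : ℂ) * t := (smul_eq_C_mul (a : ℂ)).symm ▸ rfl
  rw [hsmul, hsmul, wronskianForm, conjReflect.C_mul, Complex.conj_ofReal, wronskianForm]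
  simp only [wronskian, derivative_mul, derivative_C, derivative_X]
  ring

theorem wronskian_X_mul_conjReflect (p : ℂ[X]) (hq : q.natDegree ≤ n) :
    p.wronskian (X * conjReflect n q) = C (n + 1 : ℂ) * (p * conjReflect n q) -
      p * conjReflect n (X * derivative q) - X * derivative p * conjReflect n q := by
  rw [wronskian, conjReflect.derivative_X_mul hq]
  ring

theorem conjReflect_wronskian (hp : p.natDegree ≤ n) (hq : q.natDegree ≤ n) :
    conjReflect (n + n) (p.wronskian (X * conjReflect n q)) =
      q.wronskian (X * conjReflect n p) := by
  have hp' := (natDegree_X_mul_derivative_le p).trans hp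
  have hq' := (natDegree_X_mul_derivative_le q).trans hq
  have hq_star := conjReflect.natDegree_le hq
  rw [wronskian_X_mul_conjReflect p hq, wronskian_X_mul_conjReflect q hp, conjReflect.sub,
    conjReflect.sub, conjReflect.C_mul, conjReflect.mul hp hq_star,
    conjReflect.mul hp (conjReflect.natDegree_le hq'), conjReflect.mul hp' hq_star]
  simp only [conjReflect.conjReflect_conjReflect, map_add, map_one, map_natCast]
  ring

theorem natDegree_wronskian_le (hp : p.natDegree ≤ n) (hq : q.natDegree ≤ n) :
    (p.wronskian (X * conjReflect n q)).natDegree ≤ n + n := by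
  have hp' := (natDegree_X_mul_derivative_le p).trans hp
  have hq' := (natDegree_X_mul_derivative_le q).trans hq
  have hq_star := conjReflect.natDegree_le hq
  rw [wronskian_X_mul_conjReflect p hq]
  exact natDegree_sub_le_of_le (natDegree_sub_le_of_le
    ((natDegree_C_mul_le _ _).trans (natDegree_mul_le_of_le hp hq_star))
    (natDegree_mul_le_of_le hp (conjReflect.natDegree_le hq'))) (natDegree_mul_le_of_le hp' hq_star)
    |>.trans (by simp)

theorem natDegree_le (hp : p.natDegree ≤ n) (hq : q.natDegree ≤ n) :
    (wronskianForm n p q).natDegree ≤ n + n :=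
  natDegree_add_le_of_degree_le (natDegree_wronskian_le hp hq) (natDegree_wronskian_le hq hp)

theorem conjReflect_eq_self (hp : p.natDegree ≤ n) (hq : q.natDegree ≤ n) :
    conjReflect (n + n) (wronskianForm n p q) = wronskianForm n p q := by
  rw [wronskianForm, conjReflect.add, conjReflect_wronskian hp hq, conjReflect_wronskian hq hp,
    add_comm]

theorem one_one (n : ℕ) : wronskianForm n 1 1 = C (2 * (n + 1) : ℂ) * X ^ n := by
  have h1 : conjReflect n 1 = X ^ n := by
    rw [conjReflect, Polynomial.map_one, ← map_one C, reflect_C, map_one, one_mul]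
  rw [wronskianForm, h1, ← pow_succ', wronskian, derivative_one, derivative_X_pow,
    Nat.add_sub_cancel, map_mul, map_ofNat]
  push_cast
  ring

end wronskianForm

theorem le_norm_of_forall_mem_frontier_le_norm {U : Set ℂ} (hU : Bornology.IsBounded U)
    {g : ℂ → ℂ} (hg : DiffContOnCl ℂ g U) (h0 : ∀ z ∈ closure U, g z ≠ 0) {δ : ℝ} (hδ : 0 < δ)
    (h : ∀ z ∈ frontier U, δ ≤ ‖g z‖) {z : ℂ} (hz : z ∈ closure U) : δ ≤ ‖g z‖ := by
  have hinv : ‖(g z)⁻¹‖ ≤ δ⁻¹ :=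
    Complex.norm_le_of_forall_mem_frontier_norm_le hU (hg.inv h0) (fun w hw => by
      rw [Pi.inv_apply, norm_inv]
      exact inv_anti₀ hδ (h w hw)) hz
  rw [norm_inv] at hinv
  exact (inv_le_inv₀ (norm_pos_iff.2 (h0 z hz)) hδ).1 hinv

theorem one_le_norm_deriv_of_norm_le {f : ℂ → ℂ} {f' ζ : ℂ} (hf : HasDerivAt f f' ζ)
    (hζ : ‖ζ‖ = 1) (hfζ : ‖f ζ‖ = 1) (hle : ∀ z, ‖z‖ ≤ 1 → ‖f z‖ ≤ ‖z‖) : 1 ≤ ‖f'‖ := by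
  have hray : HasDerivAt (fun t : ℝ => f (t * ζ)) (f' * ζ) 1 := by
    refine HasDerivAt.comp_ofReal (e := fun w => f (w * ζ)) ?_
    have hline : HasDerivAt (fun w : ℂ => w * ζ) ζ ((1 : ℝ) : ℂ) := hasDerivAt_mul_const ζ
    exact HasDerivAt.comp _ (by simpa using hf) hline
  have hslope := (hasDerivAt_iff_tendsto_slope_left_right.1 hray).1.norm
  rw [norm_mul, hζ, mul_one] at hslope
  refine ge_of_tendsto hslope ?_
  filter_upwards [self_mem_nhdsWithin, nhdsWithin_le_nhds (lt_mem_nhds one_pos)] with t ht1 ht0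
  have ht1 : t < 1 := ht1
  have hnorm : ‖(t : ℂ) * ζ‖ = t := by rw [norm_mul, hζ, mul_one, Complex.norm_of_nonneg ht0.le]
  have hft : ‖f (t * ζ)‖ ≤ t := (hle _ (hnorm.trans_le ht1.le)).trans_eq hnorm
  rw [slope_def_module, norm_smul, norm_inv, Real.norm_of_nonpos (by linarith), neg_sub,
    ← div_eq_inv_mul, one_le_div (by linarith), Complex.ofReal_one, one_mul]
  linarith [norm_sub_norm_le (f ζ) (f (t * ζ)), norm_sub_rev (f ζ) (f (t * ζ))]

/-- The rational function `z p*(z) / p(z)`; it is a finite Blaschke product vanishing at `0` when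
`p` has degree at most `n` and no zeros in the closed unit disk. -/
noncomputable def blaschkeQuotient (n : ℕ) (p : ℂ[X]) (z : ℂ) : ℂ :=
  (Polynomial.X * conjReflect n p).eval z / p.eval z

theorem hasDerivAt_eval_div_eval (p q : ℂ[X]) {z : ℂ} (hz : p.eval z ≠ 0) :
    HasDerivAt (fun w => q.eval w / p.eval w) ((p.wronskian q).eval z / p.eval z ^ 2) z := by
  have hwronskian : (p.wronskian q).eval z = (Polynomial.derivative q).eval z * p.eval z -
      q.eval z * (Polynomial.derivative p).eval z := by
    simp only [Polynomial.wronskian, Polynomial.eval_sub, Polynomial.eval_mul]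
    ring
  rw [hwronskian]
  exact (q.hasDerivAt z).fun_div (p.hasDerivAt z) hz

theorem analyticAt_eval_div_eval (p q : ℂ[X]) {z : ℂ} (hz : p.eval z ≠ 0) :
    AnalyticAt ℂ (fun w => q.eval w / p.eval w) z :=
  (AnalyticOnNhd.eval_polynomial q z (Set.mem_univ z)).div
    (AnalyticOnNhd.eval_polynomial p z (Set.mem_univ z)) hz

namespace blaschkeQuotient

variable {n : ℕ} {p q : ℂ[X]}

theorem hasDerivAt {z : ℂ} (hz : p.eval z ≠ 0) :
    HasDerivAt (blaschkeQuotient n p)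
      ((wronskianForm n p p).eval z / (2 * p.eval z ^ 2)) z := by
  rw [wronskianForm, ← two_mul, Polynomial.eval_mul, Polynomial.eval_ofNat,
    mul_div_mul_left _ _ two_ne_zero]
  exact hasDerivAt_eval_div_eval p (Polynomial.X * conjReflect n p) hz

theorem norm_eq_one (hp : p.natDegree ≤ n) {z : ℂ} (h0 : p.eval z ≠ 0) (hz : ‖z‖ = 1) :
    ‖blaschkeQuotient n p z‖ = 1 := by
  rw [blaschkeQuotient, Polynomial.eval_mul, Polynomial.eval_X,
    conjReflect.eval_of_norm_eq_one hp hz, norm_div, norm_mul, norm_mul, norm_pow, hz, one_pow,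
    one_mul, one_mul, RCLike.norm_conj, div_self (norm_ne_zero_iff.2 h0)]

theorem norm_le (hp : p.natDegree ≤ n) (h0 : ∀ z, ‖z‖ ≤ 1 → p.eval z ≠ 0) {z : ℂ} (hz : ‖z‖ ≤ 1) :
    ‖blaschkeQuotient n p z‖ ≤ ‖z‖ := by
  have hquot : ‖(conjReflect n p).eval z / p.eval z‖ ≤ 1 := by
    have hcl : closure (ball (0 : ℂ) 1) = closedBall 0 1 := closure_ball _ one_ne_zero
    refine Complex.norm_le_of_forall_mem_frontier_norm_le (U := ball (0 : ℂ) 1)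
      (f := fun w => (conjReflect n p).eval w / p.eval w) isBounded_ball
      (DifferentiableOn.diffContOnCl fun w hw => ?_) (fun w hw => ?_) (by simpa [hcl] using hz)
    · rw [hcl, mem_closedBall_zero_iff] at hw
      exact (hasDerivAt_eval_div_eval p _ (h0 w hw)).differentiableAt.differentiableWithinAt
    · rw [frontier_ball _ one_ne_zero, mem_sphere_zero_iff_norm] at hw
      simp [conjReflect.eval_of_norm_eq_one hp hw, hw, h0 w hw.le]
  rw [blaschkeQuotient, Polynomial.eval_mul, Polynomial.eval_X, mul_div_assoc, norm_mul]
  exact mul_le_of_le_one_right (norm_nonneg z) hquot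

theorem two_mul_norm_sq_le (hp : p.natDegree ≤ n) (h0 : ∀ z, ‖z‖ ≤ 1 → p.eval z ≠ 0) {z : ℂ}
    (hz : ‖z‖ = 1) : 2 * ‖p.eval z‖ ^ 2 ≤ ‖(wronskianForm n p p).eval z‖ := by
  have hpz := h0 z hz.le
  have hderiv := one_le_norm_deriv_of_norm_le (hasDerivAt hpz) hz (norm_eq_one hp hpz hz)
    fun _ => norm_le hp h0
  rwa [norm_div, norm_mul, norm_pow, Complex.norm_ofNat, one_le_div (by positivity)] at hderiv

theorem isInfinitesimalDeformation (hp : p.natDegree ≤ n) (hq : q.natDegree ≤ n)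
    (h0 : ∀ z, ‖z‖ ≤ 1 → p.eval z ≠ 0) (hpq : wronskianForm n p q = 0) :
    IsInfinitesimalDeformation (blaschkeQuotient n p) (fun z => q.eval z / p.eval z)
      (fun z => (Polynomial.X * conjReflect n q).eval z / p.eval z) where
  analyticAt z hz := analyticAt_eval_div_eval p _ (h0 z hz)
  analyticAt_left z hz := analyticAt_eval_div_eval p q (h0 z hz)
  analyticAt_right z hz := analyticAt_eval_div_eval p _ (h0 z hz)
  norm_le _ := norm_le hp h0
  norm_eq_one z hz := norm_eq_one hp (h0 z hz.le) hz
  conj_mul z hz := by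
    have hpz := h0 z hz.le
    have hpz' : conj (p.eval z) ≠ 0 := (map_ne_zero (starRingEnd ℂ)).2 hpz
    have hz1 : conj z * z = 1 := conj_mul_self_of_norm_eq_one hz
    have hzn : conj z ^ n * z ^ n = 1 := by rw [← mul_pow, hz1, one_pow]
    simp only [blaschkeQuotient, Polynomial.eval_mul, Polynomial.eval_X,
      conjReflect.eval_of_norm_eq_one hp hz, conjReflect.eval_of_norm_eq_one hq hz, map_div₀,
      map_mul, map_pow, Complex.conj_conj]
    field_simp
    linear_combination conj (q.eval z) * conj z ^ n * z ^ n * hz1 + conj (q.eval z) * hzn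
  ode z hz := by
    have hpz := h0 z hz
    have hpq_eval := congrArg (Polynomial.eval z) hpq
    simp only [wronskianForm, Polynomial.wronskian, Polynomial.eval_add, Polynomial.eval_sub,
      Polynomial.eval_mul, Polynomial.eval_X, Polynomial.eval_zero] at hpq_eval
    rw [(hasDerivAt_eval_div_eval p q hpz).deriv, (hasDerivAt_eval_div_eval p _ hpz).deriv,
      show deriv (blaschkeQuotient n p) z = _ from (hasDerivAt_eval_div_eval p _ hpz).deriv]
    simp only [blaschkeQuotient, Polynomial.wronskian, Polynomial.eval_sub, Polynomial.eval_mul,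
      Polynomial.eval_X]
    field_simp
    linear_combination p.eval z * hpq_eval

end blaschkeQuotient

theorem wronskianForm.eq_zero_of_apply_eq_zero {n : ℕ} {p q : ℂ[X]} (hp : p.natDegree ≤ n)
    (hq : q.natDegree ≤ n) (h0 : ∀ z, ‖z‖ ≤ 1 → p.eval z ≠ 0) (hp_im : (p.eval 0).im = 0)
    (hq_im : (q.eval 0).im = 0) (hpq : wronskianForm n p q = 0) : q = 0 := by
  have hs := (blaschkeQuotient.isInfinitesimalDeformation hp hq h0 hpq).eqOn_zero (by simp)
    (by simp [Complex.div_im, hp_im, hq_im])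
  refine q.eq_zero_of_infinite_isRoot
    ((infinite_of_mem_nhds (0 : ℂ) (ball_mem_nhds 0 one_pos)).mono fun z hz => ?_)
  exact (div_eq_zero_iff.1 (hs hz)).resolve_right (h0 z (mem_ball_zero_iff.1 hz).le)

/-! ### Blaschke products with prescribed critical points -/

/-- The real vector space of complex polynomials of degree at most `n` with real constant
coefficient, encoded by coefficient vectors. It parametrises the finite Blaschke products
`z p* / p`; fixing the phase of `p(0)` removes the scalars acting trivially on them. -/
noncomputable def realConstCoeff (n : ℕ) : Submodule ℝ (Fin (n + 1) → ℂ) :=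
  LinearMap.ker (Complex.imLm ∘ₗ LinearMap.proj (R := ℝ) (φ := fun _ : Fin (n + 1) => ℂ) 0)

namespace realConstCoeff

variable {n : ℕ}

theorem mem_iff {c : Fin (n + 1) → ℂ} : c ∈ realConstCoeff n ↔ (c 0).im = 0 := by
  simp [realConstCoeff]

/-- The polynomial with a given coefficient vector. -/
noncomputable def toPolynomial : realConstCoeff n →ₗ[ℝ] ℂ[X] :=
  (Polynomial.ofFn (n + 1)).restrictScalars ℝ ∘ₗ (realConstCoeff n).subtype

theorem toPolynomial_apply (c : realConstCoeff n) :
    toPolynomial c = Polynomial.ofFn (n + 1) (c : Fin (n + 1) → ℂ) := rfl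

theorem coeff_toPolynomial (c : realConstCoeff n) (i : Fin (n + 1)) :
    (toPolynomial c).coeff i = (c : Fin (n + 1) → ℂ) i :=
  Polynomial.ofFn_coeff_eq_val_of_lt _ i.isLt

theorem natDegree_toPolynomial_le (c : realConstCoeff n) : (toPolynomial c).natDegree ≤ n :=
  Nat.lt_succ_iff.1 (Polynomial.ofFn_natDegree_lt (Nat.le_add_left 1 n) _)

theorem im_eval_toPolynomial_zero (c : realConstCoeff n) : ((toPolynomial c).eval 0).im = 0 := by
  rw [← Polynomial.coeff_zero_eq_eval_zero]
  exact (congrArg Complex.im (coeff_toPolynomial c 0)).trans (mem_iff.1 c.2)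

theorem toPolynomial_injective : Function.Injective (toPolynomial : realConstCoeff n →ₗ[ℝ] ℂ[X]) :=
  (Polynomial.injective_ofFn (n + 1)).comp Subtype.val_injective

theorem continuous_eval_toPolynomial :
    Continuous fun x : realConstCoeff n × ℂ => (toPolynomial x.1).eval x.2 := by
  simp only [toPolynomial_apply, Polynomial.ofFn_eq_sum_monomial, Polynomial.eval_finsetSum,
    Polynomial.eval_monomial]
  refine continuous_finsetSum _ fun i _ => ?_
  exact ((continuous_apply i).comp (continuous_subtype_val.comp continuous_fst)).mul
    (continuous_snd.pow _)

theorem norm_eval_toPolynomial_le (c : realConstCoeff n) {z : ℂ} (hz : ‖z‖ ≤ 1) :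
    ‖(toPolynomial c).eval z‖ ≤ (n + 1) * ‖c‖ := by
  simp only [toPolynomial_apply, Polynomial.ofFn_eq_sum_monomial, Polynomial.eval_finsetSum,
    Polynomial.eval_monomial]
  calc ‖∑ i : Fin (n + 1), (c : Fin (n + 1) → ℂ) i * z ^ (i : ℕ)‖
      ≤ ∑ _i : Fin (n + 1), ‖c‖ := norm_sum_le_of_le _ fun i _ => by
        rw [norm_mul, norm_pow]
        exact (mul_le_of_le_one_right (norm_nonneg _) (pow_le_one₀ (norm_nonneg z) hz)).trans
          (norm_le_pi_norm (c : Fin (n + 1) → ℂ) i)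
    _ = (n + 1) * ‖c‖ := by simp

end realConstCoeff

theorem iteratedDeriv_eval (p : ℂ[X]) (k : ℕ) (z : ℂ) :
    iteratedDeriv k (fun w => p.eval w) z = (Polynomial.derivative^[k] p).eval z := by
  induction k generalizing z with
  | zero => rw [iteratedDeriv_zero, Function.iterate_zero_apply]
  | succ k ih =>
    rw [iteratedDeriv_succ, funext ih, Polynomial.deriv, Function.iterate_succ_apply']

theorem norm_coeff_le_of_forall_norm_eq_one (p : ℂ[X]) {M : ℝ}
    (hM : ∀ z, ‖z‖ = 1 → ‖p.eval z‖ ≤ M) (k : ℕ) : ‖p.coeff k‖ ≤ M := by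
  have hcauchy := Complex.norm_iteratedDeriv_le_of_forall_mem_sphere_norm_le (c := 0) k one_pos
    p.differentiable.diffContOnCl fun z hz => hM z (mem_sphere_zero_iff_norm.1 hz)
  have hk : (0 : ℝ) < k.factorial := by positivity
  rw [iteratedDeriv_eval, ← Polynomial.coeff_zero_eq_eval_zero,
    Polynomial.coeff_iterate_derivative, zero_add, Nat.descFactorial_self, nsmul_eq_mul, norm_mul,
    Complex.norm_natCast, one_pow, div_one] at hcauchy
  exact le_of_mul_le_mul_left hcauchy hk

theorem realConstCoeff.norm_le_of_forall_norm_eq_one {n : ℕ} (c : realConstCoeff n) {M : ℝ}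
    (hM : ∀ z, ‖z‖ = 1 → ‖(toPolynomial c).eval z‖ ≤ M) : ‖c‖ ≤ M :=
  (pi_norm_le_iff_of_nonempty _).2 fun i => by
    refine (congrArg norm (coeff_toPolynomial c i)).symm.trans_le ?_
    exact norm_coeff_le_of_forall_norm_eq_one _ hM i

namespace realConstCoeff

variable {n : ℕ}

/-- The coefficients of degree `n, …, 2n` of a polynomial `t` with `t = t*`; together with the
degree bound `2n` they determine `t`. -/
noncomputable def upperCoeff (t : ℂ[X]) (ht : conjReflect (n + n) t = t) : realConstCoeff n :=
  ⟨fun i => t.coeff (n + i), mem_iff.2 (by simpa using conjReflect.im_coeff_eq_zero ht)⟩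

theorem coeff_toPolynomial_upperCoeff {t : ℂ[X]} (ht : conjReflect (n + n) t = t)
    (hdeg : t.natDegree ≤ n + n) (k : ℕ) :
    (toPolynomial (upperCoeff t ht)).coeff k = t.coeff (n + k) := by
  rcases lt_or_ge k (n + 1) with hk | hk
  · exact coeff_toPolynomial _ ⟨k, hk⟩
  · rw [Polynomial.coeff_eq_zero_of_natDegree_lt
      ((natDegree_toPolynomial_le _).trans_lt (Nat.lt_of_succ_le hk)),
      Polynomial.coeff_eq_zero_of_natDegree_lt (by lia)]

/-- The function `2 re h - re h(0)` of the polynomial `h` with coefficient vector `c`. For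
`c = upperCoeff t` it is `z⁻ⁿ t(z)` on the unit circle. -/
noncomputable def circleValue (c : realConstCoeff n) (z : ℂ) : ℝ :=
  2 * ((toPolynomial c).eval z).re - ((toPolynomial c).eval 0).re

theorem eval_eq_pow_mul_circleValue {t : ℂ[X]} (ht : conjReflect (n + n) t = t)
    (hdeg : t.natDegree ≤ n + n) {z : ℂ} (hz : ‖z‖ = 1) :
    t.eval z = z ^ n * (circleValue (upperCoeff t ht) z : ℂ) :=
  conjReflect.eval_eq_pow_mul_two_mul_re ht hdeg (coeff_toPolynomial_upperCoeff ht hdeg) hz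

theorem circleValue_add (c d : realConstCoeff n) (z : ℂ) :
    circleValue (c + d) z = circleValue c z + circleValue d z := by
  simp only [circleValue, map_add, Polynomial.eval_add, Complex.add_re]
  ring

theorem circleValue_smul (a : ℝ) (c : realConstCoeff n) (z : ℂ) :
    circleValue (a • c) z = a * circleValue c z := by
  simp only [circleValue, map_smul, Polynomial.eval_smul, Complex.smul_re, smul_eq_mul]
  ring

theorem abs_circleValue_le (c : realConstCoeff n) {z : ℂ} (hz : ‖z‖ = 1) :
    |circleValue c z| ≤ 3 * (n + 1) * ‖c‖ := by
  have hre {w : ℂ} (hw : ‖w‖ ≤ 1) := abs_le.1 <|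
    (Complex.abs_re_le_norm _).trans (norm_eval_toPolynomial_le c hw)
  have hz := hre hz.le
  have h0 := hre (w := 0) (by simp)
  rw [circleValue, abs_le]
  constructor <;> linarith

/-- The bilinear form `wronskianForm` read in coordinates: `criticalForm n c c` encodes the
critical points of the Blaschke product `z p* / p`, where `p = toPolynomial c`. -/
noncomputable def criticalForm (n : ℕ) :
    realConstCoeff n →ₗ[ℝ] realConstCoeff n →ₗ[ℝ] realConstCoeff n :=
  LinearMap.mk₂ ℝ
    (fun c d => upperCoeff (wronskianForm n (toPolynomial c) (toPolynomial d))
      (wronskianForm.conjReflect_eq_self (natDegree_toPolynomial_le c)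
        (natDegree_toPolynomial_le d)))
    (fun c₁ c₂ d => Subtype.ext <| funext fun i => by
      simp [upperCoeff, wronskianForm.add_left])
    (fun a c d => Subtype.ext <| funext fun i => by
      simp [upperCoeff, wronskianForm.smul_left])
    (fun c d₁ d₂ => Subtype.ext <| funext fun i => by
      simp [upperCoeff, wronskianForm.comm n (toPolynomial c), wronskianForm.add_left])
    (fun a c d => Subtype.ext <| funext fun i => by
      simp [upperCoeff, wronskianForm.comm n (toPolynomial c), wronskianForm.smul_left])

theorem criticalForm_comm (c d : realConstCoeff n) : criticalForm n c d = criticalForm n d c :=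
  Subtype.ext <| funext fun i => congrArg (fun t : ℂ[X] => t.coeff (n + i)) <|
    wronskianForm.comm n (toPolynomial c) (toPolynomial d)

theorem eval_wronskianForm (c : realConstCoeff n) {z : ℂ} (hz : ‖z‖ = 1) :
    (wronskianForm n (toPolynomial c) (toPolynomial c)).eval z =
      z ^ n * (circleValue (criticalForm n c c) z : ℂ) :=
  have hc := natDegree_toPolynomial_le c
  eval_eq_pow_mul_circleValue (wronskianForm.conjReflect_eq_self hc hc)
    (wronskianForm.natDegree_le hc hc) hz

theorem wronskianForm_eq_of_criticalForm_eq {c d : realConstCoeff n} {t : ℂ[X]}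
    (ht : conjReflect (n + n) t = t) (hdeg : t.natDegree ≤ n + n)
    (h : criticalForm n c d = upperCoeff t ht) :
    wronskianForm n (toPolynomial c) (toPolynomial d) = t := by
  have hc := natDegree_toPolynomial_le c
  have hd := natDegree_toPolynomial_le d
  exact conjReflect.eq_of_coeff_eq (wronskianForm.conjReflect_eq_self hc hd) ht
    (wronskianForm.natDegree_le hc hd) hdeg fun k hk =>
      congrFun (congrArg Subtype.val h) ⟨k, Nat.lt_succ_of_le hk⟩

/-- The coefficient vectors of the polynomials without zeros in the closed unit disk. -/
def zeroFree (n : ℕ) : Set (realConstCoeff n) :=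
  {c | ∀ z, ‖z‖ ≤ 1 → (toPolynomial c).eval z ≠ 0}

theorem isOpen_zeroFree (n : ℕ) : IsOpen (zeroFree n) := by
  refine isOpen_iff_mem_nhds.2 fun c hc => ?_
  have hnear : ∀ᶠ d in 𝓝 c, ∀ z ∈ closedBall (0 : ℂ) 1, (toPolynomial d).eval z ≠ 0 :=
    (isCompact_closedBall 0 1).eventually_forall_of_forall_eventually fun z hz =>
      continuous_eval_toPolynomial.continuousAt.eventually_ne (hc z (mem_closedBall_zero_iff.1 hz))
  filter_upwards [hnear] with d hd z hz
  exact hd z (mem_closedBall_zero_iff.2 hz)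

theorem criticalForm_injective {c : realConstCoeff n} (hc : c ∈ zeroFree n) :
    Function.Injective (criticalForm n c) := by
  refine (injective_iff_map_eq_zero _).2 fun d hd => ?_
  have h0 : conjReflect (n + n) 0 = 0 := by simp [conjReflect]
  have hform : wronskianForm n (toPolynomial c) (toPolynomial d) = 0 :=
    wronskianForm_eq_of_criticalForm_eq h0 (by simp) <|
      hd.trans (Subtype.ext (funext fun _ => (Polynomial.coeff_zero _).symm))
  exact toPolynomial_injective <| (wronskianForm.eq_zero_of_apply_eq_zero
    (natDegree_toPolynomial_le c) (natDegree_toPolynomial_le d) hc (im_eval_toPolynomial_zero c)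
    (im_eval_toPolynomial_zero d) hform).trans (map_zero _).symm

theorem hasStrictFDerivAt_criticalForm_self (c : realConstCoeff n) :
    HasStrictFDerivAt (fun d => criticalForm n d d)
      ((2 : ℝ) • (criticalForm n).toContinuousBilinearMap c) c := by
  have hB := (criticalForm n).toContinuousBilinearMap.hasStrictFDerivAt_of_bilinear
    (hasStrictFDerivAt_id c) (hasStrictFDerivAt_id c)
  refine hB.congr_fderiv ?_
  ext1 d
  simp [two_smul, criticalForm_comm d c]

theorem image_criticalForm_mem_nhds {c : realConstCoeff n} (hc : c ∈ zeroFree n) :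
    (fun d => criticalForm n d d) '' zeroFree n ∈ 𝓝 (criticalForm n c c) := by
  have hsurj : Function.Surjective (criticalForm n c) :=
    LinearMap.injective_iff_surjective.1 (criticalForm_injective hc)
  have hrange : ((2 : ℝ) • (criticalForm n).toContinuousBilinearMap c).range = ⊤ := by
    refine LinearMap.range_eq_top.2 fun d => ?_
    obtain ⟨e, he⟩ := hsurj ((2 : ℝ)⁻¹ • d)
    exact ⟨e, by simp [he]⟩
  rw [← (hasStrictFDerivAt_criticalForm_self c).map_nhds_eq_of_surj hrange]
  exact image_mem_map ((isOpen_zeroFree n).mem_nhds hc)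

end realConstCoeff

theorem ne_zero_of_tendstoUniformlyOn_sphere {ι : Type*} {l : Filter ι} [l.NeBot]
    {F : ι → ℂ → ℂ} {f : ℂ → ℂ} {c : ℂ} {R : ℝ} (hR : R ≠ 0)
    (hF : ∀ i, DiffContOnCl ℂ (F i) (ball c R))
    (hF0 : ∀ i, ∀ z ∈ closedBall c R, F i z ≠ 0) (hf : ContinuousOn f (sphere c R))
    (hf0 : ∀ z ∈ sphere c R, f z ≠ 0) (hunif : TendstoUniformlyOn F f l (sphere c R))
    {z : ℂ} (hz : z ∈ closedBall c R) (hlim : Tendsto (fun i => F i z) l (𝓝 (f z))) :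
    f z ≠ 0 := by
  rw [← closure_ball c hR] at hz
  have hcl := closure_ball c hR
  have hfr := frontier_ball c hR
  obtain ⟨δ, hδ, hfδ⟩ : ∃ δ > 0, ∀ w ∈ sphere c R, δ ≤ ‖f w‖ :=
    (isCompact_sphere c R).exists_forall_le' hf.norm fun w hw => norm_pos_iff.2 (hf0 w hw)
  have hlow : ∀ᶠ i in l, δ / 2 ≤ ‖F i z‖ := by
    filter_upwards [Metric.tendstoUniformlyOn_iff.1 hunif (δ / 2) (half_pos hδ)] with i hi
    refine le_norm_of_forall_mem_frontier_le_norm isBounded_ball (hF i)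
      (fun w hw => hF0 i w (hcl ▸ hw)) (half_pos hδ) (fun w hw => ?_) hz
    rw [hfr] at hw
    have hclose := hi w hw
    rw [dist_eq_norm] at hclose
    linarith [norm_sub_norm_le (f w) (F i w), hfδ w hw]
  exact norm_pos_iff.1 ((half_pos hδ).trans_le (ge_of_tendsto hlim.norm hlow))

namespace realConstCoeff

variable {n : ℕ}

theorem mem_zeroFree_of_tendsto {u : ℕ → realConstCoeff n} {c : realConstCoeff n}
    (hu : ∀ i, u i ∈ zeroFree n) (hlim : Tendsto u atTop (𝓝 c))
    (hc : ∀ z, ‖z‖ = 1 → (toPolynomial c).eval z ≠ 0) : c ∈ zeroFree n := by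
  intro z hz
  have hunif : TendstoUniformlyOn (fun i w => (toPolynomial (u i)).eval w)
      (fun w => (toPolynomial c).eval w) atTop (sphere 0 1) := by
    intro V hV
    obtain ⟨v, hv, hvV⟩ := (isCompact_sphere (0 : ℂ) 1).mem_uniformity_of_prod
      (f := fun (d : realConstCoeff n) w => (toPolynomial d).eval w) (s := Set.univ)
      continuous_eval_toPolynomial.continuousOn (Set.mem_univ c) (symm_le_uniformity hV)
    rw [nhdsWithin_univ] at hv
    filter_upwards [hlim hv] with i hi w hw
    exact hvV _ hi w hw
  refine ne_zero_of_tendstoUniformlyOn_sphere one_ne_zero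
    (fun i => (toPolynomial (u i)).differentiable.diffContOnCl)
    (fun i w hw => hu i w (mem_closedBall_zero_iff.1 hw)) (toPolynomial c).continuous.continuousOn
    (fun w hw => hc w (mem_sphere_zero_iff_norm.1 hw)) hunif (mem_closedBall_zero_iff.2 hz) ?_
  exact ((continuous_eval_toPolynomial.comp (Continuous.prodMk_left z)).tendsto c).comp hlim

theorem norm_sq_le_of_mem_zeroFree {c : realConstCoeff n} (hc : c ∈ zeroFree n) :
    ‖c‖ ^ 2 ≤ 3 * (n + 1) * ‖criticalForm n c c‖ := by
  refine (Real.le_sqrt (norm_nonneg c) (by positivity)).1 <|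
    norm_le_of_forall_norm_eq_one c fun z hz => Real.le_sqrt_of_sq_le ?_
  have hform := blaschkeQuotient.two_mul_norm_sq_le (natDegree_toPolynomial_le c) hc hz
  rw [eval_wronskianForm c hz, norm_mul, norm_pow, hz, one_pow, one_mul, Complex.norm_real,
    Real.norm_eq_abs] at hform
  linarith [abs_circleValue_le (criticalForm n c c) hz, sq_nonneg ‖(toPolynomial c).eval z‖]

/-- The coefficient vectors of the polynomials `h` such that `2 re h - h(0)` is positive on the
unit circle. -/
def circlePos (n : ℕ) : Set (realConstCoeff n) := {c | ∀ z, ‖z‖ = 1 → 0 < circleValue c z}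

theorem convex_circlePos (n : ℕ) : Convex ℝ (circlePos n) := by
  intro c hc d hd a b ha hb hab z hz
  rw [circleValue_add, circleValue_smul, circleValue_smul]
  rcases ha.eq_or_lt with rfl | ha
  · rw [zero_add] at hab
    simpa [hab] using hd z hz
  · exact add_pos_of_pos_of_nonneg (mul_pos ha (hc z hz)) (mul_nonneg hb (hd z hz).le)

theorem eval_ne_zero_of_criticalForm_mem_circlePos {c : realConstCoeff n}
    (hc : criticalForm n c c ∈ circlePos n) {z : ℂ} (hz : ‖z‖ = 1) :
    (toPolynomial c).eval z ≠ 0 := by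
  intro h0
  have hstar : (Polynomial.X * conjReflect n (toPolynomial c)).eval z = 0 := by
    rw [Polynomial.eval_mul, conjReflect.eval_of_norm_eq_one (natDegree_toPolynomial_le c) hz, h0,
      map_zero, mul_zero, mul_zero]
  have hwronskian : ((toPolynomial c).wronskian
      (Polynomial.X * conjReflect n (toPolynomial c))).eval z = 0 := by
    rw [Polynomial.wronskian, Polynomial.eval_sub, Polynomial.eval_mul,
      Polynomial.eval_mul (p := Polynomial.derivative _), h0, hstar, zero_mul, mul_zero, sub_zero]
  have hform := eval_wronskianForm c hz
  rw [wronskianForm, Polynomial.eval_add, hwronskian, add_zero] at hform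
  have hzn : z ^ n ≠ 0 := pow_ne_zero n (norm_ne_zero_iff.1 (by simp [hz]))
  exact mul_ne_zero hzn (Complex.ofReal_ne_zero.2 (hc z hz).ne') hform.symm

theorem isBounded_preimage_criticalForm {s : Set (realConstCoeff n)} (hs : Bornology.IsBounded s) :
    Bornology.IsBounded (zeroFree n ∩ (fun c => criticalForm n c c) ⁻¹' s) := by
  obtain ⟨M, hM⟩ := hs.exists_norm_le
  refine isBounded_iff_forall_norm_le.2 ⟨√(3 * (n + 1) * M), fun c hc => ?_⟩
  refine Real.le_sqrt_of_sq_le ((norm_sq_le_of_mem_zeroFree hc.1).trans ?_)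
  gcongr
  exact hM _ hc.2

theorem mem_image_criticalForm_of_mem_closure {e : realConstCoeff n} (he : e ∈ circlePos n)
    (hcl : e ∈ closure ((fun c => criticalForm n c c) '' zeroFree n)) :
    e ∈ (fun c => criticalForm n c c) '' zeroFree n := by
  obtain ⟨v, hv, hve⟩ := mem_closure_iff_seq_limit.1 hcl
  choose u hu huv using hv
  have hbdd := isBounded_preimage_criticalForm (isBounded_range_of_tendsto v hve)
  obtain ⟨c, -, k, hk, huc⟩ := tendsto_subseq_of_bounded hbdd fun i =>
    ⟨hu i, Set.mem_range.2 ⟨i, (huv i).symm⟩⟩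
  have hc : criticalForm n c c = e :=
    tendsto_nhds_unique ((hasStrictFDerivAt_criticalForm_self c).continuousAt.tendsto.comp huc)
      ((hve.comp hk.tendsto_atTop).congr fun i => (huv (k i)).symm)
  exact ⟨c, mem_zeroFree_of_tendsto (fun i => hu (k i)) huc fun z =>
    eval_ne_zero_of_criticalForm_mem_circlePos (hc ▸ he), hc⟩

theorem exists_criticalForm_mem_circlePos (n : ℕ) :
    ∃ c ∈ zeroFree n, criticalForm n c c ∈ circlePos n := by
  let c : realConstCoeff n := ⟨Pi.single 0 1, mem_iff.2 (by simp)⟩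
  have hc : toPolynomial c = 1 := by
    simp [toPolynomial_apply, c, Polynomial.ofFn_eq_sum_monomial, Pi.single_apply, apply_ite]
  refine ⟨c, fun z _ => by simp [hc], fun z hz => ?_⟩
  have hform := eval_wronskianForm c hz
  have hzn : z ^ n ≠ 0 := pow_ne_zero n (norm_ne_zero_iff.1 (by simp [hz]))
  rw [hc, wronskianForm.one_one, Polynomial.eval_mul, Polynomial.eval_C, Polynomial.eval_pow,
    Polynomial.eval_X, mul_comm, mul_right_inj' hzn] at hform
  have hval : circleValue (criticalForm n c c) z = 2 * (n + 1) := by exact_mod_cast hform.symm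
  rw [hval]
  positivity

theorem circlePos_subset_image_criticalForm (n : ℕ) :
    circlePos n ⊆ (fun c => criticalForm n c c) '' zeroFree n := by
  obtain ⟨c, hc, hpos⟩ := exists_criticalForm_mem_circlePos n
  refine (convex_circlePos n).isPreconnected.subset_of_closure_inter_subset
    (isOpen_iff_mem_nhds.2 ?_) ⟨_, hpos, c, hc, rfl⟩
    fun e ⟨hcl, he⟩ => mem_image_criticalForm_of_mem_closure he hcl
  rintro _ ⟨d, hd, rfl⟩
  exact image_criticalForm_mem_nhds hd

end realConstCoeff

theorem conjReflect.eval_natDegree_ne_zero {Q : ℂ[X]} (hQ : Q ≠ 0)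
    (hroot : ∀ z, Q.eval z = 0 → ‖z‖ < 1) {z : ℂ} (hz : ‖z‖ ≤ 1) :
    (conjReflect Q.natDegree Q).eval z ≠ 0 := by
  rcases eq_or_ne z 0 with rfl | hz0
  · rw [← Polynomial.coeff_zero_eq_eval_zero, coeff_of_le Q (Nat.zero_le _), Nat.sub_zero]
    exact (map_ne_zero _).2 (Polynomial.leadingCoeff_ne_zero.2 hQ)
  · rw [eval_of_ne_zero le_rfl hz0]
    refine mul_ne_zero (pow_ne_zero _ hz0) ((map_ne_zero _).2 fun h => (hroot _ h).not_ge ?_)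
    rw [norm_inv, RCLike.norm_conj]
    exact (one_le_inv₀ (norm_pos_iff.2 hz0)).2 hz

theorem exists_wronskianForm_eq_mul_conjReflect {n : ℕ} {Q : ℂ[X]} (hQ : Q.natDegree ≤ n)
    (hroot : ∀ z, ‖z‖ = 1 → Q.eval z ≠ 0) :
    ∃ p : ℂ[X], p.natDegree ≤ n ∧ (∀ z, ‖z‖ ≤ 1 → p.eval z ≠ 0) ∧
      wronskianForm n p p = Q * conjReflect n Q := by
  have hQ_star := conjReflect.natDegree_le hQ
  have hdeg : (Q * conjReflect n Q).natDegree ≤ n + n :=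
    Polynomial.natDegree_mul_le_of_le hQ hQ_star
  have hself : conjReflect (n + n) (Q * conjReflect n Q) = Q * conjReflect n Q := by
    rw [conjReflect.mul hQ hQ_star, conjReflect.conjReflect_conjReflect, mul_comm]
  have hpos : realConstCoeff.upperCoeff _ hself ∈ realConstCoeff.circlePos n := by
    intro z hz
    have hval := realConstCoeff.eval_eq_pow_mul_circleValue hself hdeg hz
    have hzn : z ^ n ≠ 0 := pow_ne_zero n (norm_ne_zero_iff.1 (by simp [hz]))
    rw [Polynomial.eval_mul, conjReflect.eval_of_norm_eq_one hQ hz, mul_left_comm,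
      Complex.mul_conj', mul_right_inj' hzn] at hval
    rw [← Complex.ofReal_inj.1 ((Complex.ofReal_pow _ _).trans hval)]
    exact pow_pos (norm_pos_iff.2 (hroot z hz)) 2
  obtain ⟨c, hc, hcQ⟩ := realConstCoeff.circlePos_subset_image_criticalForm n hpos
  exact ⟨_, realConstCoeff.natDegree_toPolynomial_le c, hc,
    realConstCoeff.wronskianForm_eq_of_criticalForm_eq hself hdeg hcQ⟩

theorem exists_finite_blaschke_deriv_eq_mul {Q : ℂ[X]} (hQ : Q ≠ 0)
    (hroot : ∀ z, Q.eval z = 0 → ‖z‖ < 1) :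
    ∃ f k : ℂ → ℂ, (∀ z, ‖z‖ ≤ 1 → AnalyticAt ℂ f z) ∧ (∀ z, ‖z‖ ≤ 1 → ‖f z‖ ≤ ‖z‖) ∧
      (∀ z, ‖z‖ = 1 → ‖f z‖ = 1) ∧ (∀ z, ‖z‖ ≤ 1 → AnalyticAt ℂ k z) ∧
      (∀ z, ‖z‖ ≤ 1 → k z ≠ 0) ∧ ∀ z, ‖z‖ ≤ 1 → deriv f z = Q.eval z * k z := by
  obtain ⟨p, hp, h0, hpQ⟩ := exists_wronskianForm_eq_mul_conjReflect (Q := Q) le_rfl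
    fun z hz h => (hroot z h).ne hz
  have hden {z : ℂ} (hz : ‖z‖ ≤ 1) : (2 * p ^ 2).eval z ≠ 0 := by simpa using h0 z hz
  refine ⟨blaschkeQuotient Q.natDegree p,
    fun z => (conjReflect Q.natDegree Q).eval z / (2 * p ^ 2).eval z,
    fun z hz => analyticAt_eval_div_eval p _ (h0 z hz),
    fun z => blaschkeQuotient.norm_le hp h0,
    fun z hz => blaschkeQuotient.norm_eq_one hp (h0 z hz.le) hz,
    fun z hz => analyticAt_eval_div_eval _ _ (hden hz),
    fun z hz => div_ne_zero (conjReflect.eval_natDegree_ne_zero hQ hroot hz) (hden hz),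
    fun z hz => ?_⟩
  rw [(blaschkeQuotient.hasDerivAt (h0 z hz)).deriv, hpQ, Polynomial.eval_mul, mul_div_assoc]
  simp only [Polynomial.eval_mul, Polynomial.eval_ofNat, Polynomial.eval_pow]

/-! ### Comparison with the hyperbolic metric -/

theorem eventually_one_lt_one_sub_norm_sq_mul_exp {τ Φ : ℂ → ℂ} {a τ' Φ' : ℂ}
    (hτ : HasDerivAt τ τ' a) (hΦ : HasDerivAt Φ Φ' a) (hτ0 : τ a = 0) (h : ‖τ'‖ ≤ ‖Φ'‖) :
    ∀ᶠ z in 𝓝[≠] a, 1 < (1 - ‖τ z‖ ^ 2) * Real.exp (‖Φ z - Φ a‖ ^ 2 + ‖z - a‖ ^ 2) := by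
  let v (z : ℂ) : ℝ := ‖Φ z - Φ a‖ ^ 2 + ‖z - a‖ ^ 2
  have hv : Tendsto v (𝓝[≠] a) (𝓝 0) := by
    have hcont : ContinuousAt v a := by
      have := hΦ.continuousAt
      fun_prop
    simpa [v] using hcont.tendsto.mono_left nhdsWithin_le_nhds
  have hslopeτ := (hasDerivAt_iff_tendsto_slope.1 hτ).norm.pow 2
  have hslopeΦ := (hasDerivAt_iff_tendsto_slope.1 hΦ).norm.pow 2
  have hlim := ((hslopeΦ.add_const 1).sub hslopeτ).sub (hslopeτ.mul hv)
  have hpos : 0 < ‖Φ'‖ ^ 2 + 1 - ‖τ'‖ ^ 2 - ‖τ'‖ ^ 2 * 0 := by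
    nlinarith [norm_nonneg τ', norm_nonneg Φ']
  have hτ1 : ∀ᶠ z in 𝓝[≠] a, ‖τ z‖ < 1 :=
    (hτ.continuousAt.norm.eventually (gt_mem_nhds (by simp [hτ0]))).filter_mono nhdsWithin_le_nhds
  filter_upwards [hlim.eventually (lt_mem_nhds hpos), self_mem_nhdsWithin, hτ1] with z hz hne hlt
  have hza : z - a ≠ 0 := sub_ne_zero.2 hne
  have hsq (F : ℂ → ℂ) : ‖F z - F a‖ ^ 2 = ‖slope F a z‖ ^ 2 * ‖z - a‖ ^ 2 := by
    rw [← mul_pow, ← norm_mul, slope_def_field, div_mul_cancel₀ _ hza]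
  have hτz : ‖τ z‖ ^ 2 = ‖slope τ a z‖ ^ 2 * ‖z - a‖ ^ 2 := by rw [← hsq, hτ0, sub_zero]
  have hvz : v z = (‖slope Φ a z‖ ^ 2 + 1) * ‖z - a‖ ^ 2 := by rw [add_one_mul, ← hsq]
  calc 1 < 1 + ‖z - a‖ ^ 2 * (‖slope Φ a z‖ ^ 2 + 1 - ‖slope τ a z‖ ^ 2 -
        ‖slope τ a z‖ ^ 2 * v z) := lt_add_of_pos_right 1 (by positivity)
    _ = (1 - ‖τ z‖ ^ 2) * (v z + 1) := by rw [hτz, hvz]; ring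
    _ ≤ (1 - ‖τ z‖ ^ 2) * Real.exp (v z) :=
      mul_le_mul_of_nonneg_left (Real.add_one_le_exp _) (one_sub_norm_sq_pos hlt).le

theorem one_sub_norm_sq_eq_mul_diskMobius {a w : ℂ} (ha : ‖a‖ < 1) (hw : ‖w‖ < 1) :
    1 - ‖w‖ ^ 2 =
      ‖(1 - conj a * w) ^ 2 / (1 - ‖a‖ ^ 2 : ℝ)‖ * (1 - ‖diskMobius a w‖ ^ 2) := by
  have ha' := one_sub_norm_sq_pos ha
  have hden := norm_ne_zero_iff.2 (one_sub_conj_mul_ne_zero ha hw)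
  rw [one_sub_norm_diskMobius_sq ha hw, norm_div, norm_pow, Complex.norm_real,
    Real.norm_of_nonneg ha'.le]
  field_simp

theorem norm_sq_eq_norm_sub_sq_add (w b : ℂ) :
    ‖w‖ ^ 2 = ‖w - b‖ ^ 2 + (2 * conj b * (w - b)).re + ‖b‖ ^ 2 := by
  simp only [Complex.sq_norm, Complex.normSq_apply, Complex.sub_re, Complex.sub_im, Complex.mul_re,
    Complex.mul_im, Complex.conj_re, Complex.conj_im, Complex.re_ofNat, Complex.im_ofNat]
  ring

theorem exp_norm_sq_eq_norm_cexp_mul (w b : ℂ) :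
    Real.exp (‖w‖ ^ 2) =
      ‖Complex.exp (2 * conj b * (w - b) + (‖b‖ ^ 2 : ℝ))‖ * Real.exp (‖w - b‖ ^ 2) := by
  rw [Complex.norm_exp, ← Real.exp_add, norm_sq_eq_norm_sub_sq_add w b, Complex.add_re,
    Complex.ofReal_re]
  ring_nf

/-- When `Φ' = g f'`, this compares the metric `exp (‖Φ‖² + ‖z‖² - re H - 1) ‖Φ'‖` on the disk
with the pull-back `‖f'‖ / (1 - ‖f‖²)` of the hyperbolic metric. The term `‖z‖²` makes the curvature
of the former strictly smaller than the curvature `-4` of the latter, as long as `‖Φ‖² ≤ re H`. -/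
noncomputable def metricRatio (f g Φ H : ℂ → ℂ) (z : ℂ) : ℝ :=
  ‖g z‖ * ((1 - ‖f z‖ ^ 2) * Real.exp (‖Φ z‖ ^ 2 + ‖z‖ ^ 2 - (H z).re - 1))

namespace metricRatio

variable {f g Φ H : ℂ → ℂ}

theorem le_of_norm_sq_le_re {z : ℂ} (hz : ‖z‖ ≤ 1) (hf : ‖f z‖ < 1) (hH : ‖Φ z‖ ^ 2 ≤ (H z).re) :
    metricRatio f g Φ H z ≤ ‖g z‖ * (1 - ‖f z‖ ^ 2) := by
  refine mul_le_mul_of_nonneg_left (mul_le_of_le_one_right (one_sub_norm_sq_pos hf).le ?_)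
    (norm_nonneg _)
  rw [Real.exp_le_one_iff]
  linarith [pow_le_one₀ (n := 2) (norm_nonneg z) hz]

theorem le_self {z : ℂ} (hf : ‖f z‖ < 1) :
    ‖g z‖ * ((1 - ‖f z‖ ^ 2) * Real.exp (-(H z).re - 1)) ≤ metricRatio f g Φ H z := by
  have := (one_sub_norm_sq_pos hf).le
  unfold metricRatio
  gcongr
  linarith [sq_nonneg ‖Φ z‖, sq_nonneg ‖z‖]

theorem exists_eventuallyEq_norm_mul {a : ℂ} (hf : AnalyticAt ℂ f a) (hg : AnalyticAt ℂ g a)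
    (hΦ : AnalyticAt ℂ Φ a) (hH : AnalyticAt ℂ H a) (hfa : ‖f a‖ < 1) :
    ∃ A : ℂ → ℂ, AnalyticAt ℂ A a ∧ metricRatio f g Φ H =ᶠ[𝓝 a] fun z =>
      ‖A z‖ * ((1 - ‖diskMobius (f a) (f z)‖ ^ 2) *
        Real.exp (‖Φ z - Φ a‖ ^ 2 + ‖z - a‖ ^ 2)) := by
  have hlin {F : ℂ → ℂ} (hF : AnalyticAt ℂ F a) : AnalyticAt ℂ (fun z =>
      Complex.exp (2 * conj (F a) * (F z - F a) + (‖F a‖ ^ 2 : ℝ))) a :=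
    ((analyticAt_const.mul (hF.sub analyticAt_const)).add analyticAt_const).cexp
  have hmobius : AnalyticAt ℂ (fun z => (1 - conj (f a) * f z) ^ 2 / (1 - ‖f a‖ ^ 2 : ℝ)) a :=
    ((analyticAt_const.sub (analyticAt_const.mul hf)).pow 2).div_const
  have hHexp : AnalyticAt ℂ (fun z => Complex.exp (-H z - 1)) a :=
    (hH.neg.sub analyticAt_const).cexp
  refine ⟨_, (((hg.mul hmobius).mul (hlin hΦ)).mul (hlin analyticAt_id)).mul hHexp, ?_⟩
  filter_upwards [hf.continuousAt.norm.eventually (gt_mem_nhds hfa)] with z hz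
  have hexp : Real.exp (‖Φ z‖ ^ 2 + ‖z‖ ^ 2 - (H z).re - 1) =
      Real.exp (‖Φ z‖ ^ 2) * Real.exp (‖z‖ ^ 2) * ‖Complex.exp (-H z - 1)‖ := by
    rw [Complex.norm_exp, ← Real.exp_add, ← Real.exp_add, Complex.sub_re, Complex.neg_re,
      Complex.one_re]
    ring_nf
  rw [metricRatio, hexp, one_sub_norm_sq_eq_mul_diskMobius hfa hz,
    exp_norm_sq_eq_norm_cexp_mul (Φ z) (Φ a), exp_norm_sq_eq_norm_cexp_mul z a, Real.exp_add]
  simp only [Pi.mul_apply, norm_mul, id]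
  ring

theorem le_one_of_isLocalMax {a : ℂ} (hf : AnalyticAt ℂ f a) (hg : AnalyticAt ℂ g a)
    (hΦ : AnalyticAt ℂ Φ a) (hH : AnalyticAt ℂ H a) (hfa : ‖f a‖ < 1) (ha : ‖a‖ ≤ 1)
    (hΦH : ‖Φ a‖ ^ 2 ≤ (H a).re) (hderiv : deriv Φ a = g a * deriv f a)
    (hmax : IsLocalMax (metricRatio f g Φ H) a) : metricRatio f g Φ H a ≤ 1 := by
  by_contra! hgt
  obtain ⟨A, hA, hAeq⟩ := exists_eventuallyEq_norm_mul hf hg hΦ hH hfa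
  have hA0 : A a ≠ 0 := by
    intro h
    rw [hAeq.eq_of_nhds, h, norm_zero, zero_mul] at hgt
    exact hgt.not_ge zero_le_one
  have hpos := one_sub_norm_sq_pos hfa
  have hden : (1 : ℂ) - conj (f a) * f a = (1 - ‖f a‖ ^ 2 : ℝ) := by
    rw [Complex.conj_mul']
    push_cast
    rfl
  refine not_isLocalMax_norm_mul hA hA0 (eventually_one_lt_one_sub_norm_sq_mul_exp
    (hasDerivAt_diskMobius_comp hf.differentiableAt.hasDerivAt hfa)
    hΦ.differentiableAt.hasDerivAt (diskMobius_self _) ?_) (by simp)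
    (hmax.congr hAeq)
  rw [hderiv, hden, norm_div, Complex.norm_real, Real.norm_of_nonneg hpos.le, div_le_iff₀ hpos,
    norm_mul, mul_right_comm]
  exact le_mul_of_one_le_left (norm_nonneg _) (hgt.le.trans (le_of_norm_sq_le_re ha hfa hΦH))

theorem exists_isLocalMax_ge (hf : ContinuousOn f (closedBall 0 1))
    (hfc : ∀ z, ‖z‖ = 1 → ‖f z‖ = 1) (hf1 : ∀ z, ‖z‖ < 1 → ‖f z‖ < 1)
    (hg : ContinuousOn g (closedBall 0 1)) (hΦ : ContinuousOn Φ (ball 0 1))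
    (hH : ContinuousOn H (ball 0 1)) (hΦH : ∀ z, ‖z‖ < 1 → ‖Φ z‖ ^ 2 ≤ (H z).re) {z : ℂ}
    (hz : ‖z‖ < 1) (hgt : 1 < metricRatio f g Φ H z) :
    ∃ a, ‖a‖ < 1 ∧ IsLocalMax (metricRatio f g Φ H) a ∧ 1 < metricRatio f g Φ H a := by
  have hle {w : ℂ} (hw : ‖w‖ < 1) := le_of_norm_sq_le_re (g := g) hw.le (hf1 w hw) (hΦH w hw)
  let K : Set ℂ := closedBall 0 1 ∩ (fun w => ‖g w‖ * (1 - ‖f w‖ ^ 2)) ⁻¹' Set.Ici 1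
  have hK : IsCompact K := (isCompact_closedBall 0 1).of_isClosed_subset
    (ContinuousOn.preimage_isClosed_of_isClosed (by fun_prop) isClosed_closedBall isClosed_Ici)
    Set.inter_subset_left
  have hK1 : K ⊆ ball 0 1 := fun w hw => mem_ball_zero_iff.2 <|
    (mem_closedBall_zero_iff.1 hw.1).lt_of_ne fun h => by
      have hw2 : 1 ≤ ‖g w‖ * (1 - ‖f w‖ ^ 2) := hw.2
      norm_num [hfc w h] at hw2
  have hcont : ContinuousOn (metricRatio f g Φ H) (ball 0 1) := by
    have hf' := hf.mono ball_subset_closedBall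
    have hg' := hg.mono ball_subset_closedBall
    have hre : ContinuousOn (fun z => (H z).re) (ball 0 1) :=
      Complex.continuous_re.comp_continuousOn hH
    unfold metricRatio
    fun_prop
  have hzK : z ∈ K := ⟨mem_closedBall_zero_iff.2 hz.le, hgt.le.trans (hle hz)⟩
  obtain ⟨a, haK, hmax⟩ := hK.exists_isMaxOn ⟨z, hzK⟩ (hcont.mono hK1)
  have hgt_a := hgt.trans_le (hmax hzK)
  refine ⟨a, mem_ball_zero_iff.1 (hK1 haK), ?_, hgt_a⟩
  filter_upwards [isOpen_ball.mem_nhds (hK1 haK)] with w hw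
  by_contra! hlt
  have hw' := mem_ball_zero_iff.1 hw
  exact hlt.not_ge (hmax ⟨ball_subset_closedBall hw, (hgt_a.trans hlt).le.trans (hle hw')⟩)

end metricRatio

theorem norm_mul_exp_neg_re_le_one {f g Φ H : ℂ → ℂ} (hf : ∀ z, ‖z‖ ≤ 1 → AnalyticAt ℂ f z)
    (hfc : ∀ z, ‖z‖ = 1 → ‖f z‖ = 1) (hf1 : ∀ z, ‖z‖ < 1 → ‖f z‖ < 1)
    (hg : ∀ z, ‖z‖ ≤ 1 → AnalyticAt ℂ g z) (hΦ : AnalyticOnNhd ℂ Φ (ball 0 1))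
    (hH : AnalyticOnNhd ℂ H (ball 0 1)) (hΦH : ∀ z, ‖z‖ < 1 → ‖Φ z‖ ^ 2 ≤ (H z).re)
    (hderiv : ∀ z, ‖z‖ < 1 → deriv Φ z = g z * deriv f z) {z : ℂ} (hz : ‖z‖ < 1) :
    ‖g z‖ * ((1 - ‖f z‖ ^ 2) * Real.exp (-(H z).re - 1)) ≤ 1 := by
  refine (metricRatio.le_self (Φ := Φ) (hf1 z hz)).trans (not_lt.1 fun hgt => ?_)
  have hcont {F : ℂ → ℂ} (hF : ∀ z, ‖z‖ ≤ 1 → AnalyticAt ℂ F z) :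
      ContinuousOn F (closedBall 0 1) := fun w hw =>
    (hF w (mem_closedBall_zero_iff.1 hw)).continuousAt.continuousWithinAt
  obtain ⟨a, ha, hmax, hgt_a⟩ := metricRatio.exists_isLocalMax_ge (hcont hf) hfc hf1 (hcont hg)
    hΦ.continuousOn hH.continuousOn hΦH hz hgt
  have ha' := mem_ball_zero_iff.2 ha
  exact hgt_a.not_ge (metricRatio.le_one_of_isLocalMax (hf a ha.le) (hg a ha.le) (hΦ a ha')
    (hH a ha') (hf1 a ha) ha.le (hΦH a ha) (hderiv a ha) hmax)

/-! ### Majorising a function in the Hardy space -/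

theorem norm_smul_lt_one {E : Type*} [SeminormedAddCommGroup E] [NormedSpace ℂ E] {z : ℂ} {x : E}
    (hz : ‖z‖ < 1) (hx : ‖x‖ ≤ 1) : ‖z • x‖ < 1 :=
  (norm_smul_le z x).trans_lt ((mul_le_of_le_one_right (norm_nonneg z) hx).trans_lt hz)

theorem hasSum_resolvent_apply {E : Type*} [NormedAddCommGroup E] [NormedSpace ℂ E]
    [CompleteSpace E] {L : E →L[ℂ] E} {z : ℂ} (hz : ‖z • L‖ < 1) (x : E) :
    HasSum (fun k : ℕ => z ^ k • (L ^ k) x) (Ring.inverse (1 - z • L) x) := by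
  simpa [smul_pow] using
    (hasSum_geom_series_inverse (z • L) hz).mapL (ContinuousLinearMap.apply ℂ E x)

/-- The Herglotz function `⟪a, (1 + z L) (1 - z L)⁻¹ a⟫` of an operator `L` at a vector `a`. When
`L` is a contraction, its real part at points of the unit disk is nonnegative. -/
noncomputable def herglotzFunction {E : Type*} [NormedAddCommGroup E] [InnerProductSpace ℂ E]
    (L : E →L[ℂ] E) (a : E) (z : ℂ) : ℂ :=
  inner ℂ a ((1 + z • L) (Ring.inverse (1 - z • L) a))

namespace herglotzFunction

variable {E : Type*} [NormedAddCommGroup E] [InnerProductSpace ℂ E] [CompleteSpace E]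
  {L : E →L[ℂ] E} {z : ℂ}

theorem analyticAt (hz : ‖z • L‖ < 1) (a : E) : AnalyticAt ℂ (herglotzFunction L a) z := by
  have hinv : AnalyticAt ℂ (fun w : ℂ => Ring.inverse (1 - w • L)) z :=
    (analyticAt_inverse (𝕜 := ℂ) (Units.oneSub (z • L) hz)).comp_of_eq (by fun_prop) rfl
  have hprod : AnalyticAt ℂ (fun w : ℂ => (1 + w • L) * Ring.inverse (1 - w • L)) z :=
    AnalyticAt.mul (by fun_prop) hinv
  exact ((innerSL ℂ a ∘L ContinuousLinearMap.apply ℂ E a).analyticAt _).comp hprod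

theorem re_eq (hz : ‖z • L‖ < 1) (a : E) :
    (herglotzFunction L a z).re =
      ‖Ring.inverse (1 - z • L) a‖ ^ 2 - ‖z • L (Ring.inverse (1 - z • L) a)‖ ^ 2 := by
  set y := Ring.inverse (1 - z • L) a with hy
  have ha : a = y - z • L y := by
    have := DFunLike.congr_fun
      (Ring.mul_inverse_cancel (1 - z • L) (isUnit_one_sub_of_norm_lt_one hz)) a
    simpa [hy] using this.symm
  have hre (u v : E) : (inner ℂ (u - v) (u + v)).re = ‖u‖ ^ 2 - ‖v‖ ^ 2 := by
    rw [inner_sub_left, inner_add_right, inner_add_right, ← inner_conj_symm v u]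
    simp only [inner_self_eq_norm_sq_to_K, Complex.sub_re, Complex.add_re, Complex.conj_re]
    simp only [← Complex.ofReal_pow, Complex.coe_algebraMap, Complex.ofReal_re]
    ring
  rw [← hre y, ← ha]
  simp [herglotzFunction, hy]

theorem norm_sq_sub_le_re (hz : ‖z‖ < 1) (hL : ‖L‖ ≤ 1) (a : E) :
    ‖Ring.inverse (1 - z • L) a‖ ^ 2 - ‖L (Ring.inverse (1 - z • L) a)‖ ^ 2 ≤
      (herglotzFunction L a z).re := by
  rw [re_eq (norm_smul_lt_one hz hL), norm_smul]
  gcongr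
  exact mul_le_of_le_one_left (norm_nonneg _) hz.le

end herglotzFunction

theorem memℓp_two_iff {a : ℕ → ℂ} : Memℓp a 2 ↔ Summable fun k => ‖a k‖ ^ 2 := by
  simpa using memℓp_gen_iff (E := fun _ : ℕ => ℂ) (f := a) (p := 2) (by simp)

theorem memℓp_two_shift (a : lp (fun _ : ℕ => ℂ) 2) : Memℓp (fun k => a (k + 1)) 2 :=
  memℓp_two_iff.2 ((summable_nat_add_iff 1).2 (memℓp_two_iff.1 (lp.memℓp a)))

theorem lp_two_hasSum_norm_sq (a : lp (fun _ : ℕ => ℂ) 2) :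
    HasSum (fun k => ‖a k‖ ^ 2) (‖a‖ ^ 2) := by
  simpa using lp.hasSum_norm (E := fun _ : ℕ => ℂ) (p := 2) (by simp) a

theorem lp_two_norm_sq_eq_of_shift {a b : lp (fun _ : ℕ => ℂ) 2} (h : ∀ k, b k = a (k + 1)) :
    ‖a‖ ^ 2 = ‖a 0‖ ^ 2 + ‖b‖ ^ 2 := by
  have hb : HasSum (fun k => ‖a (k + 1)‖ ^ 2) (‖b‖ ^ 2) := by
    simpa only [h] using lp_two_hasSum_norm_sq b
  exact (lp_two_hasSum_norm_sq a).unique (hb.zero_add (f := fun k => ‖a k‖ ^ 2))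

/-- The operator `(a₀, a₁, a₂, …) ↦ (a₁, a₂, …)` on `ℓ²`. -/
noncomputable def leftShift : lp (fun _ : ℕ => ℂ) 2 →L[ℂ] lp (fun _ : ℕ => ℂ) 2 :=
  LinearMap.mkContinuous
    { toFun a := ⟨fun k => a (k + 1), memℓp_two_shift a⟩
      map_add' _ _ := rfl
      map_smul' _ _ := rfl } 1 fun a => by
    rw [one_mul, ← sq_le_sq₀ (norm_nonneg _) (norm_nonneg _),
      lp_two_norm_sq_eq_of_shift (a := a) (b := ⟨_, memℓp_two_shift a⟩) fun _ => rfl]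
    exact le_add_of_nonneg_left (sq_nonneg _)

namespace leftShift

theorem apply_apply (a : lp (fun _ : ℕ => ℂ) 2) (k : ℕ) : leftShift a k = a (k + 1) := rfl

theorem pow_apply_apply (a : lp (fun _ : ℕ => ℂ) 2) (j k : ℕ) :
    (leftShift ^ j) a k = a (k + j) := by
  induction j generalizing k with
  | zero => rfl
  | succ j ih =>
    rw [pow_succ', mul_apply_eq_comp, apply_apply, ih, add_right_comm, add_assoc]

theorem norm_le_one : ‖leftShift‖ ≤ 1 := LinearMap.mkContinuous_norm_le _ zero_le_one _

theorem norm_sq_sub_norm_sq (a : lp (fun _ : ℕ => ℂ) 2) :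
    ‖a‖ ^ 2 - ‖leftShift a‖ ^ 2 = ‖a 0‖ ^ 2 :=
  sub_eq_of_eq_add (lp_two_norm_sq_eq_of_shift (apply_apply a))

end leftShift

theorem exists_norm_sq_le_re_of_summable_norm_sq {a : ℕ → ℂ} (ha : Summable fun k => ‖a k‖ ^ 2) :
    ∃ H : ℂ → ℂ, AnalyticOnNhd ℂ H (ball 0 1) ∧
      ∀ z s, ‖z‖ < 1 → HasSum (fun k => a k * z ^ k) s → ‖s‖ ^ 2 ≤ (H z).re := by
  let x : lp (fun _ : ℕ => ℂ) 2 := ⟨a, memℓp_two_iff.2 ha⟩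
  have hnorm {z : ℂ} (hz : ‖z‖ < 1) : ‖z • leftShift‖ < 1 :=
    norm_smul_lt_one hz leftShift.norm_le_one
  refine ⟨herglotzFunction leftShift x,
    fun z hz => herglotzFunction.analyticAt (hnorm (mem_ball_zero_iff.1 hz)) x, fun z s hz hs => ?_⟩
  have hs0 : Ring.inverse (1 - z • leftShift) x 0 = s := by
    have h := (hasSum_resolvent_apply (hnorm hz) x).mapL (lp.evalCLM ℂ (fun _ : ℕ => ℂ) 2 0)
    refine h.unique ?_
    convert! hs using 2 with k
    change z ^ k * (leftShift ^ k) x 0 = _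
    rw [leftShift.pow_apply_apply, zero_add, mul_comm]
  rw [← hs0, ← leftShift.norm_sq_sub_norm_sq]
  exact herglotzFunction.norm_sq_sub_le_re hz leftShift.norm_le_one x

/-! ### Primitives of Bergman functions -/

theorem circleAverage_re_eq_re_center {w : ℂ → ℂ} {r : ℝ} (hr : 0 < r)
    (hw : DifferentiableOn ℂ w (closedBall 0 r)) :
    Real.circleAverage (fun z => (w z).re) 0 r = (w 0).re := by
  rw [← closure_ball _ hr.ne', ← abs_of_pos hr] at hw
  have hint : CircleIntegrable w 0 r := ContinuousOn.circleIntegrable'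
    (hw.continuousOn.mono ((closure_ball (0 : ℂ) (abs_pos.2 hr.ne').ne').symm ▸
      sphere_subset_closedBall))
  rw [← hw.diffContOnCl.circleAverage]
  exact Complex.reCLM.circleAverage_comp_comm hint

theorem circleAverage_norm_sq_eq_add_dslope {g : ℂ → ℂ} {r : ℝ} (hr : 0 < r)
    (hg : DifferentiableOn ℂ g (closedBall 0 r)) :
    Real.circleAverage (fun z => ‖g z‖ ^ 2) 0 r =
      ‖g 0‖ ^ 2 + r ^ 2 * Real.circleAverage (fun z => ‖dslope g 0 z‖ ^ 2) 0 r := by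
  have hd : DifferentiableOn ℂ (dslope g 0) (closedBall 0 r) :=
    (Complex.differentiableOn_dslope (closedBall_mem_nhds _ hr)).2 hg
  have hint {u : ℂ → ℝ} (hu : ContinuousOn u (closedBall 0 r)) : CircleIntegrable u 0 r :=
    (hu.mono sphere_subset_closedBall).circleIntegrable hr.le
  let w (z : ℂ) : ℂ := 2 * conj (g 0) * (g z - g 0)
  have hw : DifferentiableOn ℂ w (closedBall 0 r) := (hg.sub_const _).const_mul _
  have hexpand : Set.EqOn (fun z => ‖g z‖ ^ 2)
      (fun z => r ^ 2 * ‖dslope g 0 z‖ ^ 2 + (w z).re + ‖g 0‖ ^ 2) (sphere 0 |r|) := by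
    intro z hz
    have hz' : ‖z‖ = r := by simpa [abs_of_pos hr] using hz
    have hmul : g z - g 0 = z * dslope g 0 z := by simpa using (sub_smul_dslope g 0 z).symm
    simp only [w, norm_sq_eq_norm_sub_sq_add (g z) (g 0)]
    rw [hmul, norm_mul, hz', mul_pow]
  have hcd : ContinuousOn (fun z => r ^ 2 * ‖dslope g 0 z‖ ^ 2) (closedBall 0 r) :=
    (hd.continuousOn.norm.pow 2).const_mul _
  have hcw : ContinuousOn (fun z => (w z).re) (closedBall 0 r) :=
    Complex.continuous_re.comp_continuousOn hw.continuousOn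
  rw [Real.circleAverage_congr_sphere hexpand,
    Real.circleAverage_fun_add (hint (hcd.fun_add hcw)) (hint continuousOn_const),
    Real.circleAverage_fun_add (hint hcd) (hint hcw), circleAverage_re_eq_re_center hr hw,
    Real.circleAverage_const, add_comm (‖g 0‖ ^ 2)]
  simpa [w] using Real.circleAverage_fun_smul (a := r ^ 2) (f := fun z => ‖dslope g 0 z‖ ^ 2)

theorem sum_norm_coeff_sq_le_circleAverage {g : ℂ → ℂ} {p : FormalMultilinearSeries ℂ ℂ ℂ} {r : ℝ}
    (hr : 0 < r) (hg : DifferentiableOn ℂ g (closedBall 0 r)) (hp : HasFPowerSeriesAt g p 0)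
    (N : ℕ) :
    ∑ k ∈ Finset.range N, ‖p.coeff k‖ ^ 2 * r ^ (2 * k) ≤
      Real.circleAverage (fun z => ‖g z‖ ^ 2) 0 r := by
  induction N generalizing g p with
  | zero => simpa using Real.circleAverage_nonneg_of_nonneg fun z _ => sq_nonneg ‖g z‖
  | succ N ih =>
    have hd := (Complex.differentiableOn_dslope (closedBall_mem_nhds _ hr)).2 hg
    have hp0 : p.coeff 0 = g 0 := hp.coeff_zero 1
    calc ∑ k ∈ Finset.range (N + 1), ‖p.coeff k‖ ^ 2 * r ^ (2 * k)
        = ‖g 0‖ ^ 2 + r ^ 2 * ∑ k ∈ Finset.range N, ‖p.fslope.coeff k‖ ^ 2 * r ^ (2 * k) := by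
          rw [Finset.sum_range_succ', hp0, Finset.mul_sum, add_comm]
          simp only [FormalMultilinearSeries.coeff_fslope, mul_zero, pow_zero, mul_one]
          congr 1
          exact Finset.sum_congr rfl fun k _ => by ring
      _ ≤ ‖g 0‖ ^ 2 + r ^ 2 * Real.circleAverage (fun z => ‖dslope g 0 z‖ ^ 2) 0 r := by
          gcongr
          exact ih hd hp.has_fpower_series_dslope_fslope
      _ = _ := (circleAverage_norm_sq_eq_add_dslope hr hg).symm

theorem lintegral_eq_lintegral_circleMap {f : ℂ → ENNReal} (hf : Measurable f) :
    ∫⁻ z, f z = ∫⁻ r in Set.Ioi (0 : ℝ), ENNReal.ofReal r *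
      ∫⁻ θ in Set.Ioo (-Real.pi) Real.pi, f (circleMap 0 r θ) := by
  have hpolar (q : ℝ × ℝ) : Complex.polarCoord.symm q = circleMap 0 q.1 q.2 := by
    rw [Complex.polarCoord_symm_apply, circleMap, Complex.exp_mul_I, zero_add]
    push_cast
    rfl
  have : Measurable fun q : ℝ × ℝ => f (circleMap 0 q.1 q.2) := by
    refine hf.comp (Continuous.measurable ?_)
    unfold circleMap
    fun_prop
  rw [← Complex.lintegral_comp_polarCoord_symm, polarCoord_target, Measure.volume_eq_prod,
    ← Measure.prod_restrict, lintegral_prod _ (by simp only [hpolar]; fun_prop)]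
  simp only [hpolar, smul_eq_mul, lintegral_const_mul' _ _ ENNReal.ofReal_ne_top]

theorem ofReal_two_pi_mul_circleAverage {u : ℂ → ℝ} {r : ℝ} (hr : 0 ≤ r)
    (hu : ContinuousOn u (sphere 0 r)) (hu0 : ∀ z, 0 ≤ u z) :
    ENNReal.ofReal (2 * Real.pi * Real.circleAverage u 0 r) =
      ∫⁻ θ in Set.Ioo (-Real.pi) Real.pi, ENNReal.ofReal (u (circleMap 0 r θ)) := by
  have hcont : Continuous fun θ => u (circleMap 0 r θ) :=
    hu.comp_continuous (continuous_circleMap 0 r) (circleMap_mem_sphere 0 hr)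
  have hint : IntegrableOn (fun θ => u (circleMap 0 r θ)) (Set.Ioo (-Real.pi) Real.pi) :=
    hcont.integrableOn_Icc.mono_set Set.Ioo_subset_Icc_self
  rw [← ofReal_integral_eq_lintegral_ofReal hint (Eventually.of_forall fun _ => hu0 _),
    ← integral_Ioc_eq_integral_Ioo, ← intervalIntegral.integral_of_le (by linarith [Real.pi_pos]),
    Real.circleAverage_eq_integral_add (-Real.pi),
    intervalIntegral.integral_comp_add_right (fun θ => u (circleMap 0 r θ)), smul_eq_mul,
    mul_inv_cancel_left₀ (by positivity)]
  congr 2 <;> ring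

theorem integral_one_sub_sq_mul_pow (k : ℕ) :
    ∫ r in (0 : ℝ)..1, r * (1 - r ^ 2) * (2 * Real.pi * r ^ (2 * k)) =
      Real.pi / ((k + 1) * (k + 2)) := by
  have hrw (r : ℝ) : r * (1 - r ^ 2) * (2 * Real.pi * r ^ (2 * k)) =
      2 * Real.pi * (r ^ (2 * k + 1) - r ^ (2 * k + 3)) := by ring
  simp only [hrw]
  rw [intervalIntegral.integral_const_mul, intervalIntegral.integral_sub (by simp) (by simp),
    integral_pow, integral_pow]
  push_cast
  simp only [one_pow, zero_pow (Nat.succ_ne_zero _), sub_zero]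
  field_simp
  ring

theorem ofReal_sum_norm_coeff_sq_le_lintegral {φ : ℂ → ℂ} (hφ : DifferentiableOn ℂ φ (ball 0 1))
    {p : FormalMultilinearSeries ℂ ℂ ℂ} (hp : HasFPowerSeriesAt φ p 0) (N : ℕ) {r : ℝ}
    (hr : r ∈ Set.Ioo (0 : ℝ) 1) :
    ENNReal.ofReal (∑ k ∈ Finset.range N, ‖p.coeff k‖ ^ 2 * (2 * Real.pi * r ^ (2 * k))) ≤
      ∫⁻ θ in Set.Ioo (-Real.pi) Real.pi, ENNReal.ofReal (‖φ (circleMap 0 r θ)‖ ^ 2) := by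
  have hφr : DifferentiableOn ℂ φ (closedBall 0 r) := hφ.mono (closedBall_subset_ball hr.2)
  rw [← ofReal_two_pi_mul_circleAverage (u := fun z => ‖φ z‖ ^ 2) hr.1.le
    ((hφr.continuousOn.mono sphere_subset_closedBall).norm.pow 2) fun _ => sq_nonneg _]
  refine ENNReal.ofReal_le_ofReal ?_
  calc ∑ k ∈ Finset.range N, ‖p.coeff k‖ ^ 2 * (2 * Real.pi * r ^ (2 * k))
      = 2 * Real.pi * ∑ k ∈ Finset.range N, ‖p.coeff k‖ ^ 2 * r ^ (2 * k) := by
        rw [Finset.mul_sum]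
        exact Finset.sum_congr rfl fun k _ => by ring
    _ ≤ _ := by gcongr; exact sum_norm_coeff_sq_le_circleAverage hr.1 hφr hp N

theorem ofReal_sum_mul_pi_div_eq_lintegral {c : ℕ → ℝ} (hc : ∀ k, 0 ≤ c k) (N : ℕ) :
    ENNReal.ofReal (∑ k ∈ Finset.range N, c k * (Real.pi / ((k + 1) * (k + 2)))) =
      ∫⁻ r in Set.Ioo (0 : ℝ) 1, ENNReal.ofReal (r * (1 - r ^ 2) *
        ∑ k ∈ Finset.range N, c k * (2 * Real.pi * r ^ (2 * k))) := by
  have hcont : Continuous fun r : ℝ => r * (1 - r ^ 2) *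
    ∑ k ∈ Finset.range N, c k * (2 * Real.pi * r ^ (2 * k)) := by fun_prop
  rw [← ofReal_integral_eq_lintegral_ofReal
    (hcont.integrableOn_Icc.mono_set Set.Ioo_subset_Icc_self)]
  · congr 1
    rw [← integral_Ioc_eq_integral_Ioo, ← intervalIntegral.integral_of_le zero_le_one]
    simp only [Finset.mul_sum, mul_left_comm _ (c _)]
    rw [intervalIntegral.integral_finsetSum
      fun k _ => Continuous.intervalIntegrable (by fun_prop) _ _]
    simp only [intervalIntegral.integral_const_mul, integral_one_sub_sq_mul_pow]
  · filter_upwards [ae_restrict_mem measurableSet_Ioo] with r hr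
    have h1 : 0 ≤ 1 - r ^ 2 := by nlinarith [hr.1, hr.2]
    have h0 := hr.1.le
    exact mul_nonneg (by positivity)
      (Finset.sum_nonneg fun k _ => mul_nonneg (hc k) (by positivity))

theorem ofReal_sum_norm_coeff_sq_le_lintegral_bergman {φ : ℂ → ℂ}
    (hφ : DifferentiableOn ℂ φ (ball 0 1)) {p : FormalMultilinearSeries ℂ ℂ ℂ}
    (hp : HasFPowerSeriesAt φ p 0) (N : ℕ) :
    ENNReal.ofReal (∑ k ∈ Finset.range N, ‖p.coeff k‖ ^ 2 * (Real.pi / ((k + 1) * (k + 2)))) ≤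
      ∫⁻ z in ball 0 1, ENNReal.ofReal ((1 - ‖z‖ ^ 2) * ‖φ z‖ ^ 2) := by
  let G : ℂ → ENNReal :=
    (ball 0 1).indicator fun z => ENNReal.ofReal ((1 - ‖z‖ ^ 2) * ‖φ z‖ ^ 2)
  have hG : Measurable G := by
    classical
    refine ContinuousOn.measurable_piecewise (ENNReal.continuous_ofReal.comp_continuousOn
      (ContinuousOn.mul (by fun_prop) (hφ.continuousOn.norm.pow 2))) continuousOn_const
      measurableSet_ball
  rw [← lintegral_indicator measurableSet_ball, lintegral_eq_lintegral_circleMap hG,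
    ofReal_sum_mul_pi_div_eq_lintegral fun k => sq_nonneg _]
  refine (setLIntegral_mono' measurableSet_Ioo fun r hr => ?_).trans
    (lintegral_mono_set Set.Ioo_subset_Ioi_self)
  have h1 : 0 ≤ 1 - r ^ 2 := by nlinarith [hr.1, hr.2]
  have hGr (θ : ℝ) : G (circleMap 0 r θ) =
      ENNReal.ofReal (1 - r ^ 2) * ENNReal.ofReal (‖φ (circleMap 0 r θ)‖ ^ 2) := by
    have hnorm : ‖circleMap 0 r θ‖ = r := by simp [abs_of_pos hr.1]
    exact (Set.indicator_of_mem (mem_ball_zero_iff.2 (hnorm.trans_lt hr.2)) _).trans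
      (by rw [hnorm, ENNReal.ofReal_mul h1])
  simp only [hGr]
  rw [lintegral_const_mul' _ _ ENNReal.ofReal_ne_top, mul_assoc, ENNReal.ofReal_mul hr.1.le,
    ENNReal.ofReal_mul h1]
  gcongr
  exact ofReal_sum_norm_coeff_sq_le_lintegral hφ hp N hr

theorem summable_norm_coeff_div_sq {φ : ℂ → ℂ} (hφ : DifferentiableOn ℂ φ (ball 0 1))
    (hint : IntegrableOn (fun z : ℂ => (1 - ‖z‖ ^ 2) * ‖φ z‖ ^ 2) (ball 0 1))
    {p : FormalMultilinearSeries ℂ ℂ ℂ} (hp : HasFPowerSeriesAt φ p 0) :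
    Summable fun k : ℕ => ‖p.coeff k / (k + 1)‖ ^ 2 := by
  have hfin := hint.lintegral_lt_top.ne
  have hsum : Summable fun k : ℕ => ‖p.coeff k‖ ^ 2 * (Real.pi / ((k + 1) * (k + 2))) :=
    summable_of_sum_range_le (fun k => by positivity) fun N =>
      (ENNReal.ofReal_le_iff_le_toReal hfin).1
        (ofReal_sum_norm_coeff_sq_le_lintegral_bergman hφ hp N)
  refine Summable.of_nonneg_of_le (fun k => sq_nonneg _) (fun k => ?_) hsum
  have hk : ‖(k : ℂ) + 1‖ = k + 1 := by
    rw [← Nat.cast_succ, Complex.norm_natCast, Nat.cast_succ]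
  rw [norm_div, div_pow, hk, div_eq_mul_one_div]
  refine mul_le_mul_of_nonneg_left ?_ (sq_nonneg _)
  rw [div_le_div_iff₀ (by positivity) (by positivity)]
  nlinarith [Real.pi_gt_three, Nat.cast_nonneg (α := ℝ) k]

theorem exists_primitive_norm_sq_le_re {φ : ℂ → ℂ} (hφ : DifferentiableOn ℂ φ (ball 0 1))
    (hint : IntegrableOn (fun z : ℂ => (1 - ‖z‖ ^ 2) * ‖φ z‖ ^ 2) (ball 0 1)) :
    ∃ Φ H : ℂ → ℂ, (∀ z ∈ ball (0 : ℂ) 1, HasDerivAt Φ (φ z) z) ∧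
      AnalyticOnNhd ℂ H (ball 0 1) ∧ ∀ z ∈ ball (0 : ℂ) 1, ‖Φ z‖ ^ 2 ≤ (H z).re := by
  obtain ⟨Φ, hΦ⟩ := hφ.isExactOn_ball
  have h0 : ball (0 : ℂ) 1 ∈ 𝓝 0 := ball_mem_nhds _ one_pos
  let a (k : ℕ) : ℂ := (k.factorial : ℂ)⁻¹ * iteratedDeriv k Φ 0
  have hcoeff (k : ℕ) : a (k + 1) = (iteratedDeriv k φ 0 / k.factorial) / (k + 1) := by
    have hderiv : iteratedDeriv (k + 1) Φ 0 = iteratedDeriv k φ 0 := by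
      rw [iteratedDeriv_succ']
      exact Filter.EventuallyEq.iteratedDeriv_eq k
        (by filter_upwards [h0] with z hz using (hΦ z hz).deriv)
    simp only [a, hderiv, Nat.factorial_succ, Nat.cast_mul, Nat.cast_succ]
    field_simp
  have ha : Summable fun k => ‖a k‖ ^ 2 := by
    rw [← summable_nat_add_iff 1]
    simpa only [hcoeff, FormalMultilinearSeries.coeff_ofScalars] using
      summable_norm_coeff_div_sq hφ hint (hφ.analyticAt h0).hasFPowerSeriesAt
  obtain ⟨H, hH, hle⟩ := exists_norm_sq_le_re_of_summable_norm_sq ha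
  refine ⟨Φ, H, hΦ, hH, fun z hz => hle z _ (mem_ball_zero_iff.1 hz) ?_⟩
  have hΦd : DifferentiableOn ℂ Φ (ball 0 1) := fun w hw =>
    (hΦ w hw).differentiableAt.differentiableWithinAt
  convert! Complex.hasSum_taylorSeries_on_ball hΦd hz using 2 with k
  simp only [a, sub_zero, smul_eq_mul]
  ring

/-! ### Factoring out zeros -/

theorem exists_eq_pow_mul_of_analyticOrderAt_ne_top {ψ : ℂ → ℂ} {a : ℂ} (hψ : AnalyticAt ℂ ψ a)
    (hord : analyticOrderAt ψ a ≠ ⊤) :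
    ∃ (n : ℕ) (χ : ℂ → ℂ), AnalyticAt ℂ χ a ∧ χ a ≠ 0 ∧ ∀ z, ψ z = (z - a) ^ n * χ z := by
  obtain ⟨g, hg, hga, hev⟩ := hψ.analyticOrderAt_ne_top.1 hord
  set n := analyticOrderNatAt ψ a
  simp only [smul_eq_mul] at hev
  let χ := Function.update (fun z => ψ z / (z - a) ^ n) a (g a)
  have hχa : χ a = g a := Function.update_self ..
  have hχ_of_ne : ∀ z, z ≠ a → χ z = ψ z / (z - a) ^ n := fun z hz => Function.update_of_ne hz ..
  have hpow : ∀ z, z ≠ a → (z - a) ^ n ≠ 0 := fun z hz => pow_ne_zero _ (sub_ne_zero.2 hz)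
  have hχg : g =ᶠ[𝓝 a] χ := by
    filter_upwards [hev] with z hz
    rcases eq_or_ne z a with rfl | hza
    · exact hχa.symm
    · rw [hχ_of_ne z hza, hz, mul_div_cancel_left₀ _ (hpow z hza)]
  refine ⟨n, χ, hg.congr hχg, hχa ▸ hga, fun z => ?_⟩
  rcases eq_or_ne z a with rfl | hza
  · rw [hχa, hev.self_of_nhds]
  · rw [hχ_of_ne z hza, mul_div_cancel₀ _ (hpow z hza)]

theorem analyticAt_of_eq_mul {ψ q χ : ℂ → ℂ} {z : ℂ} (hψ : AnalyticAt ℂ ψ z)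
    (hq : AnalyticAt ℂ q z) (hqz : q z ≠ 0) (h : ∀ w, ψ w = q w * χ w) : AnalyticAt ℂ χ z := by
  refine (hψ.fun_div hq hqz).congr ?_
  filter_upwards [hq.continuousAt.eventually_ne hqz] with w hw
  rw [h w, mul_div_cancel_left₀ _ hw]

theorem exists_polynomial_mul_of_finset {K : Set ℂ} {φ : ℂ → ℂ} (hφ : AnalyticOnNhd ℂ φ K)
    (hord : ∀ z ∈ K, analyticOrderAt φ z ≠ ⊤) (S : Finset ℂ) (hS : ↑S ⊆ K) :
    ∃ (Q : ℂ[X]) (ψ : ℂ → ℂ), Q ≠ 0 ∧ (∀ z, Q.eval z = 0 → z ∈ S) ∧ AnalyticOnNhd ℂ ψ K ∧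
      (∀ z ∈ S, ψ z ≠ 0) ∧ ∀ z, φ z = Q.eval z * ψ z := by
  classical
  induction S using Finset.induction_on with
  | empty => exact ⟨1, φ, one_ne_zero, by simp, hφ, by simp, by simp⟩
  | insert a S _ ih =>
    obtain ⟨ha, hSK⟩ := Set.insert_subset_iff.1 (Finset.coe_insert a S ▸ hS)
    obtain ⟨Q, ψ, hQ, hroot, hψ, hψS, hfac⟩ := ih hSK
    have hψord : analyticOrderAt ψ a ≠ ⊤ := by
      refine fun h => hord a ha (analyticOrderAt_eq_top.2 ?_)
      filter_upwards [analyticOrderAt_eq_top.1 h] with w hw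
      rw [hfac, hw, mul_zero]
    obtain ⟨n, χ, hχa, hχa0, hχ⟩ := exists_eq_pow_mul_of_analyticOrderAt_ne_top (hψ a ha) hψord
    refine ⟨Q * (Polynomial.X - Polynomial.C a) ^ n, χ,
      mul_ne_zero hQ (pow_ne_zero _ (Polynomial.X_sub_C_ne_zero a)), fun z hz => ?_,
      fun z hz => ?_, fun z hz => ?_, fun z => ?_⟩
    · rw [Polynomial.eval_mul, Polynomial.eval_pow, mul_eq_zero] at hz
      refine Finset.mem_insert.2 (hz.symm.imp (fun h => ?_) (hroot z))
      simpa [sub_eq_zero] using eq_zero_of_pow_eq_zero h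
    · rcases eq_or_ne z a with rfl | hza
      · exact hχa
      · exact analyticAt_of_eq_mul (hψ z hz) (q := fun w => (w - a) ^ n) (by fun_prop)
          (pow_ne_zero _ (sub_ne_zero.2 hza)) hχ
    · rcases Finset.mem_insert.1 hz with rfl | hzS
      · exact hχa0
      · exact right_ne_zero_of_mul (hχ z ▸ hψS z hzS)
    · simp [hfac, hχ, mul_assoc]

theorem finite_inter_zeros_of_isCompact {K : Set ℂ} {φ : ℂ → ℂ} (hK : IsCompact K)
    (hφ : AnalyticOnNhd ℂ φ K) (hord : ∀ z ∈ K, analyticOrderAt φ z ≠ ⊤) :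
    (K ∩ {z | φ z = 0}).Finite := by
  by_contra hinf
  obtain ⟨z, hz, hacc⟩ :=
    Set.Infinite.exists_accPt_of_subset_isCompact hinf hK Set.inter_subset_left
  rw [accPt_iff_frequently_nhdsNE] at hacc
  exact hord z hz (analyticOrderAt_eq_top.2
    ((hφ z hz).frequently_zero_iff_eventually_zero.1 (hacc.mono fun w hw => hw.2)))

theorem exists_polynomial_mul_of_isCompact {K U : Set ℂ} {φ : ℂ → ℂ} (hK : IsCompact K)
    (hUK : U ⊆ K) (hφ : AnalyticOnNhd ℂ φ K) (hord : ∀ z ∈ K, analyticOrderAt φ z ≠ ⊤) :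
    ∃ (Q : ℂ[X]) (ψ : ℂ → ℂ), Q ≠ 0 ∧ (∀ z, Q.eval z = 0 → z ∈ U) ∧ AnalyticOnNhd ℂ ψ K ∧
      (∀ z ∈ U, ψ z ≠ 0) ∧ ∀ z, φ z = Q.eval z * ψ z := by
  have hfin : (U ∩ {z | φ z = 0}).Finite :=
    (finite_inter_zeros_of_isCompact hK hφ hord).subset (Set.inter_subset_inter_left _ hUK)
  obtain ⟨Q, ψ, hQ, hroot, hψ, hψ0, hfac⟩ := exists_polynomial_mul_of_finset hφ hord hfin.toFinset
    (by simpa using Set.inter_subset_left.trans hUK)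
  refine ⟨Q, ψ, hQ, fun z hz => (hfin.mem_toFinset.1 (hroot z hz)).1, hψ, fun z hz h => ?_, hfac⟩
  exact hψ0 z (hfin.mem_toFinset.2 ⟨hz, by simp [hfac, h]⟩) h

/-! ### Normal families and orders of vanishing -/

theorem exists_norm_le_one_deriv_eq_mul_of_closedBall {φ Φ H : ℂ → ℂ}
    (hφ : AnalyticOnNhd ℂ φ (closedBall 0 1))
    (hord : ∀ z ∈ closedBall 0 1, analyticOrderAt φ z ≠ ⊤)
    (hΦ : ∀ z ∈ ball 0 1, HasDerivAt Φ (φ z) z) (hH : AnalyticOnNhd ℂ H (ball 0 1))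
    (hΦH : ∀ z ∈ ball 0 1, ‖Φ z‖ ^ 2 ≤ (H z).re) :
    ∃ f g : ℂ → ℂ, DifferentiableOn ℂ f (ball 0 1) ∧ (∀ z ∈ ball 0 1, ‖f z‖ ≤ 1) ∧
      DifferentiableOn ℂ g (ball 0 1) ∧ (∀ z ∈ ball 0 1, deriv f z = φ z * g z) ∧
      ∀ z ∈ ball 0 1, (1 - ‖z‖ ^ 2) * Real.exp (-(H z).re - 1) ≤ ‖g z‖ := by
  simp only [AnalyticOnNhd, mem_ball_zero_iff, mem_closedBall_zero_iff] at *
  obtain ⟨Q, ψ, hQ, hroot, hψ, hψ0, hfac⟩ :=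
    exists_polynomial_mul_of_isCompact (isCompact_closedBall (0 : ℂ) 1) ball_subset_closedBall
      (fun z hz => hφ z (mem_closedBall_zero_iff.1 hz))
      fun z hz => hord z (mem_closedBall_zero_iff.1 hz)
  simp only [AnalyticOnNhd, mem_ball_zero_iff, mem_closedBall_zero_iff] at hroot hψ hψ0
  obtain ⟨f, k, hf, hfz, hfc, hk, hk0, hderiv⟩ := exists_finite_blaschke_deriv_eq_mul hQ hroot
  have hcomparison (z : ℂ) (hz : ‖z‖ < 1) :
      ‖ψ z / k z‖ * ((1 - ‖f z‖ ^ 2) * Real.exp (-(H z).re - 1)) ≤ 1 := by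
    refine norm_mul_exp_neg_re_le_one (g := fun z => ψ z / k z) hf hfc
      (fun w hw => (hfz w hw.le).trans_lt hw) (fun w hw => (hψ w hw).fun_div (hk w hw) (hk0 w hw))
      ?_ (fun w hw => hH w (mem_ball_zero_iff.1 hw)) hΦH (fun w hw => ?_) hz
    · exact DifferentiableOn.analyticOnNhd (fun w hw =>
        (hΦ w (mem_ball_zero_iff.1 hw)).differentiableAt.differentiableWithinAt) isOpen_ball
    · have := hk0 w hw.le
      rw [(hΦ w hw).deriv, hderiv w hw.le, hfac]
      field_simp
  refine ⟨f, fun z => k z / ψ z, fun z hz => ?_, fun z hz => (hfz z hz.le).trans hz.le,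
    fun z hz => ?_, fun z hz => ?_, fun z hz => ?_⟩
  · exact (hf z (mem_ball_zero_iff.1 hz).le).differentiableAt.differentiableWithinAt
  · have hz := mem_ball_zero_iff.1 hz
    exact ((hk z hz.le).fun_div (hψ z hz.le) (hψ0 z hz)).differentiableAt.differentiableWithinAt
  · have := hψ0 z hz
    rw [hderiv z hz.le, hfac]
    field_simp
  · have hpos : 0 < ‖ψ z / k z‖ := norm_pos_iff.2 (div_ne_zero (hψ0 z hz) (hk0 z hz.le))
    calc (1 - ‖z‖ ^ 2) * Real.exp (-(H z).re - 1)
        ≤ (1 - ‖f z‖ ^ 2) * Real.exp (-(H z).re - 1) := by gcongr; exact hfz z hz.le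
      _ ≤ ‖ψ z / k z‖⁻¹ := (le_inv_mul_iff₀ hpos).2 (hcomparison z hz) |>.trans_eq (mul_one _)
      _ = ‖k z / ψ z‖ := by rw [← norm_inv, inv_div]

theorem exists_norm_le_one_deriv_eq_dilation_mul {φ Φ H : ℂ → ℂ}
    (hφ : AnalyticOnNhd ℂ φ (ball 0 1)) (hord : ∀ z ∈ ball 0 1, analyticOrderAt φ z ≠ ⊤)
    (hΦ : ∀ z ∈ ball 0 1, HasDerivAt Φ (φ z) z) (hH : AnalyticOnNhd ℂ H (ball 0 1))
    (hΦH : ∀ z ∈ ball 0 1, ‖Φ z‖ ^ 2 ≤ (H z).re) {r : ℂ} (hr0 : r ≠ 0) (hr1 : ‖r‖ < 1) :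
    ∃ f g : ℂ → ℂ, DifferentiableOn ℂ f (ball 0 1) ∧ (∀ z ∈ ball 0 1, ‖f z‖ ≤ 1) ∧
      DifferentiableOn ℂ g (ball 0 1) ∧ (∀ z ∈ ball 0 1, deriv f z = r * φ (r * z) * g z) ∧
      ∀ z ∈ ball 0 1, (1 - ‖z‖ ^ 2) * Real.exp (-(H (r * z)).re - 1) ≤ ‖g z‖ := by
  have hr {z : ℂ} (hz : z ∈ closedBall 0 1) : r * z ∈ ball 0 1 := by
    rw [mem_ball_zero_iff, norm_mul]
    exact mul_lt_one_of_nonneg_of_lt_one_left (norm_nonneg r) hr1 (mem_closedBall_zero_iff.1 hz)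
  have hdil (z : ℂ) : AnalyticAt ℂ (fun z => r * z) z := analyticAt_const.mul analyticAt_id
  have hφr {z : ℂ} (hz : z ∈ closedBall 0 1) : AnalyticAt ℂ (fun z => φ (r * z)) z :=
    (hφ _ (hr hz)).fun_comp (hdil z)
  refine exists_norm_le_one_deriv_eq_mul_of_closedBall (φ := fun z => r * φ (r * z))
    (Φ := fun z => Φ (r * z)) (H := fun z => H (r * z)) (fun z hz => analyticAt_const.mul (hφr hz))
    (fun z hz => ?_) (fun z hz => ?_) (fun z hz => ?_)
    fun z hz => hΦH _ (hr (ball_subset_closedBall hz))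
  · have hconst : analyticOrderAt (fun _ : ℂ => r) z = 0 :=
      analyticAt_const.analyticOrderAt_eq_zero.2 hr0
    have hcomp : analyticOrderAt (φ ∘ fun z => r * z) z = analyticOrderAt φ (r * z) :=
      analyticOrderAt_comp_of_deriv_ne_zero (hdil z) (by simpa [deriv_const_mul_field] using hr0)
    have hmul := analyticOrderAt_mul analyticAt_const (hφr hz) (f := fun _ : ℂ => r)
    rw [hconst, zero_add] at hmul
    exact (hmul.trans hcomp).trans_ne (hord _ (hr hz))
  · simpa only [Function.comp_def, mul_one, mul_comm r (φ _)] using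
      (hΦ _ (hr (ball_subset_closedBall hz))).comp z ((hasDerivAt_id z).const_mul r)
  · exact (hH _ (hr (ball_subset_closedBall hz))).fun_comp (hdil z)

theorem equicontinuousAt_of_norm_le {ι : Type*} {U : Set ℂ} (hU : IsOpen U) {f : ι → ℂ → ℂ}
    (hf : ∀ i, DifferentiableOn ℂ (f i) U) {C : ℝ} (hC : ∀ i, ∀ z ∈ U, ‖f i z‖ ≤ C) {a : ℂ}
    (ha : a ∈ U) : EquicontinuousAt f a := by
  obtain ⟨R, hR, hRU⟩ := Metric.isOpen_iff.1 hU a ha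
  refine Metric.equicontinuousAt_of_continuity_modulus (fun z => (C + C) / R * dist z a) ?_ f ?_
  · simpa using (by fun_prop : Continuous fun z => (C + C) / R * dist z a).tendsto a
  · filter_upwards [ball_mem_nhds a hR] with z hz i
    rw [dist_comm]
    refine Complex.dist_le_div_mul_dist_of_mapsTo_ball ((hf i).mono hRU) (fun w hw => ?_) hz
    exact mem_closedBall.2 <| (dist_le_norm_add_norm _ _).trans
      (add_le_add (hC i w (hRU hw)) (hC i a ha))

theorem tendstoLocallyUniformlyOn_of_equicontinuousAt {ι X α : Type*} [TopologicalSpace X]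
    [LocallyCompactSpace X] [UniformSpace α] {l : Filter ι} {f : ι → X → α} {F : X → α} {U : Set X}
    (hU : IsOpen U) (hf : ∀ x ∈ U, EquicontinuousAt f x)
    (hlim : ∀ x ∈ U, Tendsto (fun i => f i x) l (𝓝 (F x))) : TendstoLocallyUniformlyOn f F l U := by
  refine (tendstoLocallyUniformlyOn_iff_forall_isCompact hU).2 fun K hKU hK => ?_
  have hcompact : ∀ L ∈ ({K} : Set (Set X)), IsCompact L := fun L hL => hL ▸ hK
  have hequi : ∀ L ∈ ({K} : Set (Set X)), EquicontinuousOn f L := fun L hL x hx =>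
    (hf x (hKU (hL ▸ hx))).equicontinuousWithinAt L
  refine UniformOnFun.tendsto_iff_tendstoUniformlyOn.1
    ((EquicontinuousOn.tendsto_uniformOnFun_iff_pi' hcompact hequi l F).2 ?_) K rfl
  exact tendsto_pi_nhds.2 fun x => hlim x (hKU (by simpa using x.2))

theorem exists_tendstoLocallyUniformlyOn_of_norm_le {ι : Type*} (l : Ultrafilter ι) {U : Set ℂ}
    (hU : IsOpen U) {f : ι → ℂ → ℂ} (hf : ∀ i, DifferentiableOn ℂ (f i) U) {C : ℝ}
    (hC : ∀ i, ∀ z ∈ U, ‖f i z‖ ≤ C) :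
    ∃ F : ℂ → ℂ, (∀ z ∈ U, ‖F z‖ ≤ C) ∧ TendstoLocallyUniformlyOn f F l U := by
  have hlim (z : ℂ) : ∃ w, z ∈ U → ‖w‖ ≤ C ∧ Tendsto (fun i => f i z) l (𝓝 w) := by
    by_cases hz : z ∈ U
    · obtain ⟨w, hw, hlim⟩ := (isCompact_closedBall (0 : ℂ) C).ultrafilter_le_nhds'
        (l.map fun i => f i z) (Ultrafilter.mem_map.2 <| univ_mem' fun i =>
          mem_closedBall_zero_iff.2 (hC i z hz))
      exact ⟨w, fun _ => ⟨mem_closedBall_zero_iff.1 hw, hlim⟩⟩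
    · exact ⟨0, fun h => absurd h hz⟩
  choose F hF using hlim
  exact ⟨F, fun z hz => (hF z hz).1, tendstoLocallyUniformlyOn_of_equicontinuousAt hU
    (fun a ha => equicontinuousAt_of_norm_le hU hf hC ha) fun z hz => (hF z hz).2⟩

theorem tendstoLocallyUniformlyOn_dilation {ι : Type*} {l : Filter ι} {r : ι → ℂ}
    (hr : Tendsto r l (𝓝 1)) {φ : ℂ → ℂ} {U : Set ℂ} (hU : IsOpen U) (hφ : ContinuousOn φ U) :
    TendstoLocallyUniformlyOn (fun i z => r i * φ (r i * z)) φ l U := by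
  refine hU.tendstoLocallyUniformlyOn_iff_forall_tendsto.2 fun z hz => ?_
  have hφz : Tendsto φ (𝓝 z) (𝓝 (φ z)) := hφ.continuousAt (hU.mem_nhds hz)
  have hrl : Tendsto (fun p : ι × ℂ => r p.1) (l ×ˢ 𝓝 z) (𝓝 1) := hr.comp tendsto_fst
  have hrz : Tendsto (fun p : ι × ℂ => r p.1 * p.2) (l ×ˢ 𝓝 z) (𝓝 z) := by
    simpa only [one_mul] using hrl.mul tendsto_snd
  have hdil : Tendsto (fun p : ι × ℂ => r p.1 * φ (r p.1 * p.2)) (l ×ˢ 𝓝 z) (𝓝 (φ z)) := by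
    simpa only [one_mul, Function.comp_apply] using hrl.mul (hφz.comp hrz)
  exact ((hφz.comp tendsto_snd).prodMk_nhds hdil).mono_right (nhds_le_uniformity _)

theorem norm_le_div_of_sphere {a : ℂ} {ρ δ M : ℝ} (hρ : 0 < ρ) (hδ : 0 < δ) {q g : ℂ → ℂ}
    (hg : DifferentiableOn ℂ g (closedBall a ρ)) (hq : ∀ w ∈ sphere a ρ, δ ≤ ‖q w‖)
    (hM : ∀ w ∈ sphere a ρ, ‖q w * g w‖ ≤ M) {z : ℂ} (hz : z ∈ ball a ρ) : ‖g z‖ ≤ M / δ := by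
  refine Complex.norm_le_of_forall_mem_frontier_norm_le isBounded_ball
    (hg.diffContOnCl_ball subset_rfl) (fun w hw => ?_) (subset_closure hz)
  rw [frontier_ball a hρ.ne'] at hw
  rw [le_div_iff₀' hδ]
  calc δ * ‖g w‖ ≤ ‖q w‖ * ‖g w‖ := by gcongr; exact hq w hw
    _ = ‖q w * g w‖ := (norm_mul _ _).symm
    _ ≤ M := hM w hw

theorem exists_closedBall_subset_ne_zero_sphere {U : Set ℂ} {φ : ℂ → ℂ} {a : ℂ} (hU : U ∈ 𝓝 a)
    (hφ : AnalyticAt ℂ φ a) (hord : analyticOrderAt φ a ≠ ⊤) :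
    ∃ ρ > 0, closedBall a ρ ⊆ U ∧ ∀ z ∈ sphere a ρ, φ z ≠ 0 := by
  have hne : ∀ᶠ z in 𝓝[≠] a, φ z ≠ 0 :=
    hφ.eventually_eq_zero_or_eventually_ne_zero.resolve_left (mt analyticOrderAt_eq_top.2 hord)
  obtain ⟨ρ, hρ, hsub⟩ := Metric.nhds_basis_closedBall.mem_iff.1
    (inter_mem hU (eventually_nhdsWithin_iff.1 hne))
  refine ⟨ρ, hρ, fun z hz => (hsub hz).1, fun z hz => ?_⟩
  exact (hsub (sphere_subset_closedBall hz)).2 (ne_of_mem_sphere hz hρ.ne')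

theorem isBigO_of_tendstoLocallyUniformlyOn_mul {ι : Type*} {l : Filter ι} [l.NeBot] {U : Set ℂ}
    (hU : IsOpen U) {q g : ι → ℂ → ℂ} {φ u : ℂ → ℂ} (hφ : AnalyticOnNhd ℂ φ U)
    (hu : ContinuousOn u U) (hg : ∀ i, DifferentiableOn ℂ (g i) U)
    (hq_lim : TendstoLocallyUniformlyOn q φ l U)
    (hu_lim : TendstoLocallyUniformlyOn (fun i z => q i z * g i z) u l U) {a : ℂ} (ha : a ∈ U)
    (hord : analyticOrderAt φ a ≠ ⊤) : u =O[𝓝 a] φ := by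
  obtain ⟨ρ, hρ, hρU, hφ0⟩ :=
    exists_closedBall_subset_ne_zero_sphere (hU.mem_nhds ha) (hφ a ha) hord
  have hsphere : sphere a ρ ⊆ U := sphere_subset_closedBall.trans hρU
  have hS := isCompact_sphere a ρ
  obtain ⟨w, hw, hmin⟩ := hS.exists_isMinOn (NormedSpace.sphere_nonempty.2 hρ.le)
    (hφ.continuousOn.mono hsphere).norm
  set δ := ‖φ w‖ / 2
  have hδ : 0 < δ := half_pos (norm_pos_iff.2 (hφ0 w hw))
  have hδ2 : δ + δ = ‖φ w‖ := add_halves _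
  obtain ⟨M, hM⟩ := hS.exists_bound_of_continuousOn (hu.mono hsphere)
  have hunif {p : ι → ℂ → ℂ} {P : ℂ → ℂ} (h : TendstoLocallyUniformlyOn p P l U) :=
    Metric.tendstoUniformlyOn_iff.1
      ((tendstoLocallyUniformlyOn_iff_forall_isCompact hU).1 h _ hsphere hS)
  refine .of_bound ((M + 1) / δ) ?_
  filter_upwards [ball_mem_nhds a hρ] with z hz
  have hzU := hρU (ball_subset_closedBall hz)
  refine le_of_tendsto_of_tendsto (hu_lim.tendsto_at hzU).norm
    ((hq_lim.tendsto_at hzU).norm.const_mul _) ?_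
  filter_upwards [hunif hq_lim δ hδ, hunif hu_lim 1 one_pos] with i hqi hui
  have hgz : ‖g i z‖ ≤ (M + 1) / δ := by
    refine norm_le_div_of_sphere (q := q i) hρ hδ ((hg i).mono hρU) (fun v hv => ?_)
      (fun v hv => ?_) hz
    · have hmin_v : ‖φ w‖ ≤ ‖φ v‖ := hmin hv
      have hqi_v := dist_eq_norm (φ v) (q i v) ▸ hqi v hv
      linarith [norm_le_norm_add_norm_sub' (φ v) (q i v)]
    · have hui_v := dist_eq_norm (u v) (q i v * g i v) ▸ hui v hv
      linarith [norm_le_norm_add_norm_sub (u v) (q i v * g i v), hM v hv]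
  rw [norm_mul, mul_comm]
  gcongr

theorem vOrder_eq_analyticOrderAt {f : ℂ → ℂ} {z : ℂ} (hf : AnalyticAt ℂ f z) :
    vOrder f z = analyticOrderAt f z := by
  refine ENat.eq_of_forall_natCast_le_iff fun n => ?_
  rw [natCast_le_analyticOrderAt_iff_iteratedDeriv_eq_zero hf, vOrder, le_sInf_iff]
  simp only [Set.forall_mem_image, Set.mem_ofPred_eq, Nat.cast_le]
  exact forall_congr' fun i => ⟨fun h hi => by_contra fun h0 => (h h0).not_gt hi,
    fun h h0 => not_lt.1 fun hi => h0 (h hi)⟩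

theorem meromorphicOrderAt_nonneg_of_norm_le {f : ℂ → ℂ} {a : ℂ} (hf : MeromorphicAt f a) {C : ℝ}
    (hC : ∀ᶠ z in 𝓝 a, ‖f z‖ ≤ C) : 0 ≤ meromorphicOrderAt f a := by
  by_contra! hneg
  have htop := tendsto_norm_cobounded_atTop.comp
    ((tendsto_cobounded_iff_meromorphicOrderAt_neg hf).2 hneg)
  obtain ⟨z, hz, hz'⟩ := ((htop.eventually_gt_atTop C).and
    (hC.filter_mono nhdsWithin_le_nhds)).exists
  exact (hz.trans_le hz').false

theorem analyticOrderAt_le_of_isBigO {f g : ℂ → ℂ} {a : ℂ} (hf : AnalyticAt ℂ f a)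
    (hg : AnalyticAt ℂ g a) (h : f =O[𝓝 a] g) : analyticOrderAt g a ≤ analyticOrderAt f a := by
  obtain ⟨C, hC0, hC⟩ := h.exists_nonneg
  have hquot : 0 ≤ meromorphicOrderAt (f / g) a := by
    refine meromorphicOrderAt_nonneg_of_norm_le (hf.meromorphicAt.div hg.meromorphicAt) (C := C) ?_
    filter_upwards [hC.bound] with z hz
    rw [Pi.div_apply, norm_div]
    exact div_le_of_le_mul₀ (norm_nonneg _) hC0 hz
  have hmul : f / g * g =ᶠ[𝓝 a] f := by
    filter_upwards [h.eq_zero_imp] with z hz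
    exact div_mul_cancel_of_imp hz
  have hle : meromorphicOrderAt g a ≤ meromorphicOrderAt f a := by
    rw [← meromorphicOrderAt_congr (hmul.filter_mono nhdsWithin_le_nhds),
      meromorphicOrderAt_mul (hf.meromorphicAt.div hg.meromorphicAt) hg.meromorphicAt]
    exact le_add_of_nonneg_left hquot
  rw [hf.meromorphicOrderAt_eq, hg.meromorphicOrderAt_eq] at hle
  exact (WithTop.map_le_iff _ Nat.cast_le).1 hle

theorem isBigO_of_norm_mul_le {E F : Type*} [NormedAddCommGroup E] [NormedAddCommGroup F]
    {X : Type*} [TopologicalSpace X] {f : X → E} {g : X → F} {m : X → ℝ} {a : X}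
    (hm : ContinuousAt m a) (hma : 0 < m a) (h : ∀ᶠ x in 𝓝 a, ‖f x‖ * m x ≤ ‖g x‖) :
    f =O[𝓝 a] g := by
  refine .of_bound (m a / 2)⁻¹ ?_
  filter_upwards [h, hm.eventually_const_lt (half_lt_self hma)] with x hx hmx
  rw [le_inv_mul_iff₀ (half_pos hma), mul_comm]
  exact (mul_le_mul_of_nonneg_left hmx.le (norm_nonneg _)).trans hx

theorem exists_ne_of_deriv_ne_zero {f : ℂ → ℂ} {U : Set ℂ} {a : ℂ} (hU : U ∈ 𝓝 a)
    (hf : deriv f a ≠ 0) : ∃ z ∈ U, ∃ w ∈ U, f z ≠ f w := by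
  by_contra! hconst
  refine hf ((?_ : f =ᶠ[𝓝 a] fun _ => f a).deriv_eq.trans (deriv_const a _))
  filter_upwards [hU] with z hz
  exact hconst z hz a (mem_of_mem_nhds hU)

theorem exists_norm_le_one_isBigO_deriv {φ Φ H : ℂ → ℂ} (hφ : AnalyticOnNhd ℂ φ (ball 0 1))
    (hord : ∀ z ∈ ball 0 1, analyticOrderAt φ z ≠ ⊤)
    (hΦ : ∀ z ∈ ball 0 1, HasDerivAt Φ (φ z) z) (hH : AnalyticOnNhd ℂ H (ball 0 1))
    (hΦH : ∀ z ∈ ball 0 1, ‖Φ z‖ ^ 2 ≤ (H z).re) :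
    ∃ f : ℂ → ℂ, DifferentiableOn ℂ f (ball 0 1) ∧ (∀ z ∈ ball 0 1, ‖f z‖ ≤ 1) ∧
      (∀ a ∈ ball 0 1, deriv f =O[𝓝 a] φ) ∧
      ∀ z ∈ ball 0 1, ‖φ z‖ * ((1 - ‖z‖ ^ 2) * Real.exp (-(H z).re - 1)) ≤ ‖deriv f z‖ := by
  obtain ⟨r, -, hr, hr_lim⟩ := exists_seq_strictMono_tendsto' (zero_lt_one (α := ℝ))
  have hr_norm (n : ℕ) : ‖(r n : ℂ)‖ < 1 := by
    rw [Complex.norm_of_nonneg (hr n).1.le]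
    exact (hr n).2
  choose f g hf hf1 hg hderiv hlower using fun n =>
    exists_norm_le_one_deriv_eq_dilation_mul hφ hord hΦ hH hΦH
      (Complex.ofReal_ne_zero.2 (hr n).1.ne') (hr_norm n)
  obtain ⟨F, hF1, hF_lim⟩ :=
    exists_tendstoLocallyUniformlyOn_of_norm_le (hyperfilter ℕ) isOpen_ball hf hf1
  have hF := hF_lim.differentiableOn (.of_forall hf) isOpen_ball
  have hrC : Tendsto (fun n => (r n : ℂ)) (hyperfilter ℕ : Filter ℕ) (𝓝 1) :=
    Complex.ofReal_one ▸ (hr_lim.mono_left Nat.hyperfilter_le_atTop).ofReal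
  have hφ_lim := tendstoLocallyUniformlyOn_dilation hrC isOpen_ball hφ.continuousOn
  have hderiv_lim := (hF_lim.deriv (.of_forall hf) isOpen_ball).congr
    fun n z hz => hderiv n z hz
  refine ⟨F, hF, hF1, fun a ha => ?_, fun z hz => ?_⟩
  · exact isBigO_of_tendstoLocallyUniformlyOn_mul isOpen_ball hφ
      (hF.deriv isOpen_ball).continuousOn hg hφ_lim hderiv_lim ha (hord a ha)
  · have hH_lim : Tendsto (fun n => (H (r n * z)).re) (hyperfilter ℕ : Filter ℕ)
        (𝓝 (H z).re) := by
      refine ((Complex.continuous_re.tendsto _).comp (hH z hz).continuousAt).comp ?_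
      simpa only [one_mul] using hrC.mul_const z
    refine le_of_tendsto_of_tendsto ((hφ_lim.tendsto_at hz).norm.mul
      (((hH_lim.neg.sub_const 1).rexp).const_mul _)) (hderiv_lim.tendsto_at hz).norm
      (.of_forall fun n => ?_)
    simp only [norm_mul (_ * _) (g n z)]
    exact mul_le_mul_of_nonneg_left (hlower n z hz) (norm_nonneg _)

theorem exists_norm_le_one_analyticOrderAt_deriv_eq {φ : ℂ → ℂ}
    (hφ : DifferentiableOn ℂ φ (ball 0 1)) (hord : ∀ z ∈ ball 0 1, analyticOrderAt φ z ≠ ⊤)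
    (hint : IntegrableOn (fun z : ℂ => (1 - ‖z‖ ^ 2) * ‖φ z‖ ^ 2) (ball 0 1)) :
    ∃ f : ℂ → ℂ, DifferentiableOn ℂ f (ball 0 1) ∧ (∀ z ∈ ball 0 1, ‖f z‖ ≤ 1) ∧
      ∀ z ∈ ball 0 1, analyticOrderAt (deriv f) z = analyticOrderAt φ z := by
  obtain ⟨Φ, H, hΦ, hH, hΦH⟩ := exists_primitive_norm_sq_le_re hφ hint
  have hφ_an := hφ.analyticOnNhd isOpen_ball
  obtain ⟨f, hf, hf1, hupper, hlower⟩ := exists_norm_le_one_isBigO_deriv hφ_an hord hΦ hH hΦH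
  refine ⟨f, hf, hf1, fun a ha => ?_⟩
  have hf_an := (hf.analyticOnNhd isOpen_ball).deriv a ha
  refine le_antisymm (analyticOrderAt_le_of_isBigO (hφ_an a ha) hf_an ?_)
    (analyticOrderAt_le_of_isBigO hf_an (hφ_an a ha) (hupper a ha))
  refine isBigO_of_norm_mul_le (m := fun z => (1 - ‖z‖ ^ 2) * Real.exp (-(H z).re - 1)) ?_
    (mul_pos (one_sub_norm_sq_pos (mem_ball_zero_iff.1 ha)) (Real.exp_pos _)) ?_
  · have hre : ContinuousAt (fun z => (H z).re) a :=
      Complex.continuous_re.continuousAt.comp (hH a ha).continuousAt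
    fun_prop
  · filter_upwards [isOpen_ball.mem_nhds ha] with z hz using hlower z hz

end

/-- **Bergman zero sets are critical sets.** For every holomorphic function `φ` on the
open unit disk, not identically zero, belonging to the Bergman space `A²₁`
(`∬_𝔻 (1 − |z|²)|φ(z)|² dxdy < ∞`), there is a nonconstant holomorphic map `f` of the
disk into the closed unit disk such that the order of vanishing of `f'` at every
point of the disk equals that of `φ`. -/
theorem bergman_zero_set_is_critical_set (φ : ℂ → ℂ)
    (hφ_diff : ∀ z ∈ Metric.ball (0 : ℂ) 1, DifferentiableAt ℂ φ z)
    (hφ_ne : ∃ z ∈ Metric.ball (0 : ℂ) 1, φ z ≠ 0)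
    (hφ_int : IntegrableOn (fun z : ℂ => (1 - ‖z‖ ^ 2) * ‖φ z‖ ^ 2)
      (Metric.ball 0 1) volume) :
    ∃ f : ℂ → ℂ,
      (∀ z ∈ Metric.ball (0 : ℂ) 1, DifferentiableAt ℂ f z) ∧
      (∀ z ∈ Metric.ball (0 : ℂ) 1, ‖f z‖ ≤ 1) ∧
      (∃ z ∈ Metric.ball (0 : ℂ) 1, ∃ w ∈ Metric.ball (0 : ℂ) 1, f z ≠ f w) ∧
      ∀ z ∈ Metric.ball (0 : ℂ) 1, vOrder (deriv f) z = vOrder φ z := by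
  have hφ : DifferentiableOn ℂ φ (ball 0 1) := fun z hz =>
    (hφ_diff z hz).differentiableWithinAt
  have hφ_an := hφ.analyticOnNhd isOpen_ball
  obtain ⟨a, ha, hφa⟩ := hφ_ne
  have hφ_order : analyticOrderAt φ a = 0 := (hφ_an a ha).analyticOrderAt_eq_zero.2 hφa
  have hord (z : ℂ) (hz : z ∈ ball 0 1) : analyticOrderAt φ z ≠ ⊤ :=
    hφ_an.analyticOrderAt_ne_top_of_isPreconnected (convex_ball 0 1).isPreconnected ha hz
      (by simp [hφ_order])
  obtain ⟨f, hf, hf1, horder⟩ := exists_norm_le_one_analyticOrderAt_deriv_eq hφ hord hφ_int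
  have hf'_an := (hf.analyticOnNhd isOpen_ball).deriv
  have hf'a : deriv f a ≠ 0 :=
    (hf'_an a ha).analyticOrderAt_eq_zero.1 ((horder a ha).trans hφ_order)
  refine ⟨f, fun z hz => hf.differentiableAt (isOpen_ball.mem_nhds hz), hf1,
    exists_ne_of_deriv_ne_zero (isOpen_ball.mem_nhds ha) hf'a, fun z hz => ?_⟩
  rw [vOrder_eq_analyticOrderAt (hf'_an z hz), vOrder_eq_analyticOrderAt (hφ_an z hz),
    horder z hz]
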